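/- arXiv:1303.1421 — 11 statements merged into one kernel-verified Lean document; each statement's English description precedes it below -/
import Mathlib

section
/- Let Ω ⊆ ℝⁿ be open, let f : Ω → ℝ be continuous, let A be a continuous field of symmetric n×n real matrices on Ω, and let p ∈ Ω. If f satisfies Hess f ≤ A at p in the barrier sense, then f satisfies Hess f ≤ A at p in the viscosity sense. -/
open Finset

/-- Second partial derivative `∂_j ∂_i h` at `p`: the `(i,j)` entry of the Hessian matrix. -/
noncomputable def hess2 {n : ℕ} (h : (Fin n → ℝ) → ℝ) (p : Fin n → ℝ) (i j : Fin n) : ℝ :=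
  fderiv ℝ (fun x => fderiv ℝ h x (Pi.single i 1)) p (Pi.single j 1)

lemma aux_one {φ ψ : ℝ → ℝ} {q : ℝ} (h1 : ∀ᶠ t in nhds 0, HasDerivAt φ (ψ t) t)
    (h2 : HasDerivAt ψ q 0) (h3 : IsLocalMin φ 0) : 0 ≤ q := by
  by_contra hq
  push Not at hq
  have e1 : deriv φ =ᶠ[nhds 0] ψ := h1.mono fun t ht => ht.deriv
  have e2 : deriv (deriv φ) 0 = q := by rw [e1.deriv_eq, h2.deriv]
  have hmax : IsLocalMax φ 0 :=
    isLocalMax_of_deriv_deriv_neg (by rw [e2]; exact hq) h3.deriv_eq_zero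
      h1.self_of_nhds.continuousAt
  have e3 : φ =ᶠ[nhds 0] fun _ => φ 0 := by
    filter_upwards [h3, hmax] with t a b
    exact le_antisymm b a
  have e4 : deriv φ =ᶠ[nhds 0] fun _ => 0 := by
    have := e3.deriv
    simpa using this
  have e5 : deriv (deriv φ) 0 = 0 := by rw [e4.deriv_eq]; simp
  linarith

lemma aux_two {n : ℕ} {h : (Fin n → ℝ) → ℝ} {p : Fin n → ℝ} (hh : ContDiffAt ℝ 2 h p)
    (v : Fin n → ℝ) :
    (∀ᶠ t in nhds (0:ℝ), HasDerivAt (fun t : ℝ => h (p + t • v)) (fderiv ℝ h (p + t • v) v) t) ∧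
    HasDerivAt (fun t : ℝ => fderiv ℝ h (p + t • v) v)
      (∑ i, ∑ j, hess2 h p i j * v i * v j) 0 := by
  have hl : ∀ t : ℝ, HasDerivAt (fun t : ℝ => p + t • v) v t := fun t => by
    simpa using ((hasDerivAt_id t).smul_const v).const_add p
  have hv : ∀ L : (Fin n → ℝ) →L[ℝ] ℝ, L v = ∑ i, v i * L (Pi.single i 1) := fun L => by
    conv_lhs => rw [pi_eq_sum_univ' v]
    simp only [map_sum, map_smul, smul_eq_mul]
  constructor
  · have hd : ∀ᶠ x in nhds p, DifferentiableAt ℝ h x :=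
      (hh.eventually (by simp)).mono fun x hx => hx.differentiableAt (by norm_num)
    have ht : Filter.Tendsto (fun t : ℝ => p + t • v) (nhds 0) (nhds p) := by
      have := (hl 0).continuousAt.tendsto
      simpa using this
    filter_upwards [ht.eventually hd] with t h1
    exact h1.hasFDerivAt.comp_hasDerivAt t (hl t)
  · have hF : DifferentiableAt ℝ (fderiv ℝ h) p :=
      (hh.fderiv_right (m := 1) (by norm_num)).differentiableAt (by norm_num)
    have key : ∀ i, HasDerivAt (fun t : ℝ => fderiv ℝ h (p + t • v) (Pi.single i 1))
        (∑ j, v j * hess2 h p i j) 0 := fun i => by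
      have h1 : DifferentiableAt ℝ (fun x => fderiv ℝ h x (Pi.single i 1)) (p + (0:ℝ) • v) := by
        simpa using hF.clm_apply (differentiableAt_const _)
      have h2 := h1.hasFDerivAt.comp_hasDerivAt (0:ℝ) (hl 0)
      rw [hv] at h2
      simpa [hess2, Function.comp_def] using h2
    have := HasDerivAt.fun_sum (u := Finset.univ) fun i _ => (key i).const_mul (v i)
    have e1 : (fun t : ℝ => fderiv ℝ h (p + t • v) v) =
        fun t : ℝ => ∑ i, v i * fderiv ℝ h (p + t • v) (Pi.single i 1) := funext fun t => hv _
    have e2 : ∑ i, ∑ j, hess2 h p i j * v i * v j = ∑ i, v i * ∑ j, v j * hess2 h p i j := by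
      refine Finset.sum_congr rfl fun i _ => ?_
      rw [Finset.mul_sum]
      exact Finset.sum_congr rfl fun j _ => by ring
    rw [e1, e2]
    exact this

/-- Barrier sense implies viscosity sense for the inequality `Hess f ≤ A` at a point `p`. -/
theorem barrier_implies_viscosity_hessian {n : ℕ}
    (Ω : Set (Fin n → ℝ)) (hΩ : IsOpen Ω)
    (f : (Fin n → ℝ) → ℝ) (hf : ContinuousOn f Ω)
    (A : (Fin n → ℝ) → Matrix (Fin n) (Fin n) ℝ)
    (hAcont : ∀ i j, ContinuousOn (fun x => A x i j) Ω)
    (hAsymm : ∀ x ∈ Ω, ∀ i j, A x i j = A x j i)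
    (p : Fin n → ℝ) (hp : p ∈ Ω)
    (hbarrier : ∀ ε : ℝ, 0 < ε → ∃ (U : Set (Fin n → ℝ)) (h : (Fin n → ℝ) → ℝ),
      IsOpen U ∧ p ∈ U ∧ U ⊆ Ω ∧ ContDiffOn ℝ 2 h U ∧ h p = f p ∧
      (∀ x ∈ U, f x ≤ h x) ∧
      ∀ v : Fin n → ℝ,
        0 ≤ ∑ i, ∑ j, (A p i j + (if i = j then ε else 0) - hess2 h p i j) * v i * v j) :
    ∀ (U : Set (Fin n → ℝ)) (h : (Fin n → ℝ) → ℝ),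
      IsOpen U → p ∈ U → U ⊆ Ω → ContDiffOn ℝ 2 h U → h p = f p →
      (∀ x ∈ U, h x ≤ f x) →
      ∀ v : Fin n → ℝ,
        0 ≤ ∑ i, ∑ j, (A p i j - hess2 h p i j) * v i * v j := by
  intro U h hU hpU hUΩ hC hhp hle v
  have main : ∀ ε : ℝ, 0 < ε →
      0 ≤ (∑ i, ∑ j, (A p i j - hess2 h p i j) * v i * v j) + ε * ∑ i, v i * v i := by
    intro ε hε
    obtain ⟨W, k, hW, hpW, -, hCk, hkp, hfk, hk⟩ := hbarrier ε hε
    obtain ⟨a1, a2⟩ := aux_two (hC.contDiffAt (hU.mem_nhds hpU)) v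
    obtain ⟨b1, b2⟩ := aux_two (hCk.contDiffAt (hW.mem_nhds hpW)) v
    have hmin : IsLocalMin (fun t : ℝ => k (p + t • v) - h (p + t • v)) 0 := by
      have ht : Filter.Tendsto (fun t : ℝ => p + t • v) (nhds 0) (nhds p) := by
        have : Continuous (fun t : ℝ => p + t • v) := by fun_prop
        simpa using this.tendsto 0
      filter_upwards [ht.eventually (hU.mem_nhds hpU), ht.eventually (hW.mem_nhds hpW)] with t x y
      have := hle _ x
      have := hfk _ y
      simp only [zero_smul, add_zero, hkp, hhp]
      linarith
    have hq := aux_one (φ := fun t : ℝ => k (p + t • v) - h (p + t • v))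
      (ψ := fun t : ℝ => fderiv ℝ k (p + t • v) v - fderiv ℝ h (p + t • v) v)
      (by filter_upwards [a1, b1] with t x y using y.sub x) (b2.sub a2) hmin
    have hk' := hk v
    have e : ∑ i, ∑ j, (A p i j + (if i = j then ε else 0) - hess2 k p i j) * v i * v j
        = (∑ i, ∑ j, (A p i j - hess2 h p i j) * v i * v j) + ε * (∑ i, v i * v i)
          - ((∑ i, ∑ j, hess2 k p i j * v i * v j) - ∑ i, ∑ j, hess2 h p i j * v i * v j) := by
      simp only [sub_mul, add_mul, Finset.sum_sub_distrib, Finset.sum_add_distrib, ite_mul,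
        zero_mul, Finset.sum_ite_eq, Finset.mem_univ, if_true, Finset.mul_sum, mul_assoc]
      ring
    linarith
  have hS : 0 ≤ ∑ i, v i * v i := Finset.sum_nonneg fun i _ => mul_self_nonneg _
  by_contra hneg
  push Not at hneg
  set Q := ∑ i, ∑ j, (A p i j - hess2 h p i j) * v i * v j
  set S := ∑ i, v i * v i
  have h1 := main (-Q / (2 * (S + 1))) (div_pos (by linarith) (by linarith))
  have h2 : -Q / (2 * (S + 1)) * S ≤ -Q / 2 := by
    rw [div_mul_eq_mul_div, div_le_div_iff₀ (by linarith) (by norm_num)]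
    nlinarith
  linarith
end

section
/- Let Ω ⊆ ℝⁿ be open, let f : Ω → ℝ be continuous, let α : Ω → ℝ be continuous, and let p ∈ Ω. If f satisfies Δf ≤ α at p in the barrier sense, then f satisfies Δf ≤ α at p in the viscosity sense. -/
open Finset

/-- The Laplacian of `h` at `p`: the trace of the Hessian matrix. -/
noncomputable def lapl {n : ℕ} (h : (Fin n → ℝ) → ℝ) (p : Fin n → ℝ) : ℝ :=
  ∑ i, hess2 h p i i

lemma hess2_diffAt {n : ℕ} {g : (Fin n → ℝ) → ℝ} {p : Fin n → ℝ}
    (hg : ContDiffAt ℝ 2 g p) (v : Fin n → ℝ) :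
    DifferentiableAt ℝ (fun x => fderiv ℝ g x v) p := by
  have h1 : ContDiffAt ℝ 1 (fderiv ℝ g) p := hg.fderiv_right (by norm_num)
  exact (h1.differentiableAt (by norm_num)).clm_apply (differentiableAt_const v)

lemma ev_diffAt {n : ℕ} {g : (Fin n → ℝ) → ℝ} {p : Fin n → ℝ}
    (hg : ContDiffAt ℝ 2 g p) : ∀ᶠ x in nhds p, DifferentiableAt ℝ g x := by
  filter_upwards [hg.eventually (by simp)] with x hx
  exact hx.differentiableAt (by norm_num)

lemma hess2_nonneg {n : ℕ} {g : (Fin n → ℝ) → ℝ} {p : Fin n → ℝ}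
    (hg : ContDiffAt ℝ 2 g p) (hm : IsLocalMin g p) (i : Fin n) :
    0 ≤ hess2 g p i i := by
  unfold hess2
  set v : Fin n → ℝ := Pi.single i 1 with hv
  have hl : ∀ t : ℝ, HasDerivAt (fun t : ℝ => p + t • v) v t := fun t => by
    simpa using ((hasDerivAt_id t).smul_const v).const_add p
  have h0 : p + (0 : ℝ) • v = p := by simp
  have ht : Filter.Tendsto (fun t : ℝ => p + t • v) (nhds 0) (nhds p) := by
    have := (hl 0).continuousAt.tendsto
    rwa [h0] at this
  set φ : ℝ → ℝ := fun t => g (p + t • v) with hφ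
  have hd : deriv φ =ᶠ[nhds 0] fun t => fderiv ℝ g (p + t • v) v := by
    filter_upwards [ht.eventually (ev_diffAt hg)] with t hx
    exact (hx.hasFDerivAt.comp_hasDerivAt t (hl t)).deriv
  have hdd : deriv (deriv φ) 0 = fderiv ℝ (fun x => fderiv ℝ g x v) p v := by
    rw [hd.deriv_eq]
    have h2 := (hess2_diffAt hg v).hasFDerivAt
    have h3 : HasFDerivAt (fun x => fderiv ℝ g x v)
      (fderiv ℝ (fun x => fderiv ℝ g x v) p) (p + (0 : ℝ) • v) := by rw [h0]; exact h2
    exact (h3.comp_hasDerivAt (0 : ℝ) (hl 0)).deriv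
  have hmin : IsLocalMin φ 0 := by
    filter_upwards [ht.eventually hm] with t hx
    simpa [hφ] using hx
  rw [← hdd]
  by_contra! hneg
  have hcont : ContinuousAt φ 0 := by
    have : ContinuousAt g (p + (0 : ℝ) • v) := by rw [h0]; exact hg.continuousAt
    exact ContinuousAt.comp (f := fun t : ℝ => p + t • v) this (hl 0).continuousAt
  have hmax : IsLocalMax φ 0 := isLocalMax_of_deriv_deriv_neg hneg hmin.deriv_eq_zero hcont
  have hc : φ =ᶠ[nhds 0] fun _ => φ 0 := by
    filter_upwards [hmin, hmax] with t h1 h2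
    exact le_antisymm h2 h1
  have := hc.deriv.deriv_eq
  simp at this
  linarith

lemma hess2_sub {n : ℕ} {k h : (Fin n → ℝ) → ℝ} {p : Fin n → ℝ}
    (hk : ContDiffAt ℝ 2 k p) (hh : ContDiffAt ℝ 2 h p) (i : Fin n) :
    hess2 (fun x => k x - h x) p i i = hess2 k p i i - hess2 h p i i := by
  unfold hess2
  have : (fun x => fderiv ℝ (fun x => k x - h x) x (Pi.single i 1)) =ᶠ[nhds p]
      fun x => fderiv ℝ k x (Pi.single i 1) - fderiv ℝ h x (Pi.single i 1) := by
    filter_upwards [ev_diffAt hk, ev_diffAt hh] with x h1 h2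
    rw [fderiv_fun_sub h1 h2]; rfl
  rw [this.fderiv_eq, fderiv_fun_sub (hess2_diffAt hk _) (hess2_diffAt hh _)]; rfl

/-- Barrier sense implies viscosity sense for the inequality `Δ f ≤ α` at a point `p`. -/
theorem barrier_implies_viscosity_laplacian {n : ℕ}
    (Ω : Set (Fin n → ℝ)) (hΩ : IsOpen Ω)
    (f : (Fin n → ℝ) → ℝ) (hf : ContinuousOn f Ω)
    (α : (Fin n → ℝ) → ℝ) (hα : ContinuousOn α Ω)
    (p : Fin n → ℝ) (hp : p ∈ Ω)
    (hbarrier : ∀ ε : ℝ, 0 < ε → ∃ (U : Set (Fin n → ℝ)) (h : (Fin n → ℝ) → ℝ),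
      IsOpen U ∧ p ∈ U ∧ U ⊆ Ω ∧ ContDiffOn ℝ 2 h U ∧ h p = f p ∧
      (∀ x ∈ U, f x ≤ h x) ∧ lapl h p ≤ α p + ε) :
    ∀ (U : Set (Fin n → ℝ)) (h : (Fin n → ℝ) → ℝ),
      IsOpen U → p ∈ U → U ⊆ Ω → ContDiffOn ℝ 2 h U → h p = f p →
      (∀ x ∈ U, h x ≤ f x) → lapl h p ≤ α p := by
  intro U h hU hpU _ hh hhp hle
  refine le_of_forall_pos_le_add fun ε hε => ?_
  obtain ⟨V, k, hV, hpV, _, hk, hkp, hge, hlap⟩ := hbarrier ε hε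
  refine le_trans ?_ hlap
  have hk' : ContDiffAt ℝ 2 k p := hk.contDiffAt (hV.mem_nhds hpV)
  have hh' : ContDiffAt ℝ 2 h p := hh.contDiffAt (hU.mem_nhds hpU)
  have hm : IsLocalMin (fun x => k x - h x) p := by
    filter_upwards [hU.mem_nhds hpU, hV.mem_nhds hpV] with x h1 h2
    have := hle x h1
    have := hge x h2
    simp only [hkp, hhp]
    linarith
  unfold lapl
  refine Finset.sum_le_sum fun i _ => ?_
  have := hess2_nonneg (hk'.sub hh') hm i
  rw [hess2_sub hk' hh'] at this
  linarith
end

section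
/- Let f : ℝ → ℝ be defined by f(x) = x²·sin(1/x) for x ≠ 0 and f(0) = 0. Then f satisfies f''(0) ≤ 0 in the viscosity sense: every C² function h defined on a neighborhood U of 0 with h(0) = 0 and h ≤ f on U satisfies h''(0) ≤ 0. -/
/-- The function `f(x) = x² sin(1/x)` (with `f(0) = 0`) satisfies `f''(0) ≤ 0` in the
viscosity sense: every `C²` function `h` on a neighborhood `U` of `0` with `h 0 = 0` and
`h ≤ f` on `U` satisfies `h''(0) ≤ 0`. -/
theorem viscosity_second_deriv_nonpos_of_x_sq_sin_inv
    (f : ℝ → ℝ)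
    (hf : ∀ x : ℝ, f x = if x = 0 then 0 else x ^ 2 * Real.sin (1 / x))
    (U : Set ℝ) (h : ℝ → ℝ)
    (hU : IsOpen U) (h0U : (0 : ℝ) ∈ U)
    (hC2 : ContDiffOn ℝ 2 h U)
    (h00 : h 0 = 0)
    (hle : ∀ x ∈ U, h x ≤ f x) :
    deriv (deriv h) 0 ≤ 0 := by
  by_contra hpos
  push Not at hpos
  have hUn : U ∈ nhds (0 : ℝ) := hU.mem_nhds h0U
  have hcd : ContDiffAt ℝ 2 h 0 := hC2.contDiffAt hUn
  have hdiff : DifferentiableAt ℝ h 0 := hcd.differentiableAt (by norm_num)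
  have hmax : IsLocalMax (fun x => h x - x ^ 2) 0 := by
    filter_upwards [hUn] with x hx
    have h1 := hle x hx
    rw [hf] at h1
    simp only [h00]
    split_ifs at h1 with hx0
    · nlinarith [sq_nonneg x]
    · nlinarith [sq_nonneg x, Real.sin_le_one (1 / x)]
  have hd0 : deriv h 0 = 0 := by
    have h2 := hdiff.hasDerivAt.sub (hasDerivAt_pow 2 (0 : ℝ))
    have h3 := IsLocalMax.hasDerivAt_eq_zero hmax h2
    norm_num at h3
    exact h3
  have hmin : IsLocalMin h 0 :=
    isLocalMin_of_deriv_deriv_pos hpos hd0 hdiff.continuousAt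
  have hlim : Filter.Tendsto (fun n : ℕ => ((n : ℝ) * (2 * Real.pi) + -(Real.pi / 2))⁻¹)
      Filter.atTop (nhds 0) := by
    apply Filter.Tendsto.inv_tendsto_atTop
    apply Filter.tendsto_atTop_add_const_right
    exact tendsto_natCast_atTop_atTop.atTop_mul_const Real.two_pi_pos
  obtain ⟨n, ⟨hn1, hn2⟩, hn3⟩ := (((hlim.eventually hmin).and (hlim.eventually hUn)).and
    (Filter.eventually_ge_atTop 1)).exists
  have hn4 : (1 : ℝ) ≤ n := by exact_mod_cast hn3
  have hy : 0 < (n : ℝ) * (2 * Real.pi) + -(Real.pi / 2) := by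
    nlinarith [Real.pi_pos]
  have hxpos := inv_pos.mpr hy
  have h1 := hle _ hn2
  rw [hf, if_neg hxpos.ne', one_div, inv_inv, add_comm (_ * _), Real.sin_add_nat_mul_two_pi,
    Real.sin_neg, Real.sin_pi_div_two, add_comm (-_)] at h1
  rw [h00] at hn1
  nlinarith [pow_pos hxpos 2]
end

section
/- Let f : ℝ → ℝ be defined by f(x) = x²·sin(1/x) for x ≠ 0 and f(0) = 0. Then every C² function h defined on a neighborhood U of 0 with h(0) = 0 and h ≥ f on U satisfies h''(0) ≥ 2. In particular, f does not satisfy f''(0) ≤ 0 in the barrier sense: there exists ε > 0 (e.g. ε = 1) such that there is no neighborhood U of 0 and C² function h : U → ℝ with h(0) = f(0), h ≥ f on U and h''(0) ≤ 0 + ε. -/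
theorem barrier_aux (f : ℝ → ℝ)
    (hf : ∀ x : ℝ, f x = if x = 0 then 0 else x ^ 2 * Real.sin (1 / x))
    (U : Set ℝ) (h : ℝ → ℝ) (hU : IsOpen U) (h0U : (0 : ℝ) ∈ U) (hc : ContDiffOn ℝ 2 h U)
    (h0 : h 0 = 0) (hle : ∀ x ∈ U, f x ≤ h x) : 2 ≤ deriv (deriv h) 0 := by
  have hUn : U ∈ nhds (0 : ℝ) := hU.mem_nhds h0U
  have hd : ∀ x ∈ U, DifferentiableAt ℝ h x := fun x hx =>
    (hc.differentiableOn (by norm_num)).differentiableAt (hU.mem_nhds hx)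
  have hc1 : ContDiffOn ℝ 1 (deriv h) U := hc.deriv_of_isOpen hU (by norm_num)
  have hdd : DifferentiableAt ℝ (deriv h) 0 :=
    (hc1.differentiableOn (by norm_num)).differentiableAt hUn
  have hsq : ∀ a x : ℝ, HasDerivAt (fun x : ℝ => a * x ^ 2) (2 * a * x) x := by
    intro a x
    have := (hasDerivAt_pow 2 x).const_mul a
    exact this.congr_deriv (by norm_num; ring)
  have hd0 : deriv h 0 = 0 := by
    have hmin : IsLocalMin (fun x => h x + 1 * x ^ 2) 0 := by
      filter_upwards [hUn] with x hx
      have h1 := hle x hx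
      rw [hf] at h1
      split_ifs at h1 with hx0
      · subst hx0; simp
      · have := Real.neg_one_le_sin (1 / x)
        simp only [h0]
        nlinarith [sq_nonneg x]
    have h2 := hmin.hasDerivAt_eq_zero ((hd 0 h0U).hasDerivAt.add (hsq 1 0))
    simpa using h2
  by_contra! hlt
  set c := deriv (deriv h) 0 with hcdef
  obtain ⟨a, ha1, ha2⟩ : ∃ a : ℝ, c < 2 * a ∧ a < 1 := ⟨(c + 2) / 4, by linarith, by linarith⟩
  have hG : ∀ x ∈ U, HasDerivAt (fun x => a * x ^ 2 - h x) (2 * a * x - deriv h x) x :=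
    fun x hx => (hsq a x).sub (hd x hx).hasDerivAt
  have hGe : deriv (fun x => a * x ^ 2 - h x) =ᶠ[nhds 0] fun x => 2 * a * x - deriv h x := by
    filter_upwards [hUn] with x hx using (hG x hx).deriv
  have hG2 : deriv (deriv (fun x => a * x ^ 2 - h x)) 0 = 2 * a - c := by
    rw [hGe.deriv_eq]
    have := ((hasDerivAt_id (0 : ℝ)).const_mul (2 * a)).sub hdd.hasDerivAt
    have t := this.deriv
    rw [mul_one] at t
    exact t
  have hmin : IsLocalMin (fun x => a * x ^ 2 - h x) 0 := by
    apply isLocalMin_of_deriv_deriv_pos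
    · rw [hG2]; linarith
    · rw [(hG 0 h0U).deriv, hd0]; simp
    · exact (hG 0 h0U).continuousAt
  have ht : Filter.Tendsto (fun n : ℕ => (Real.pi / 2 + n * (2 * Real.pi))⁻¹)
      Filter.atTop (nhds 0) := by
    apply Filter.Tendsto.inv_tendsto_atTop
    apply Filter.tendsto_atTop_add_const_left
    exact tendsto_natCast_atTop_atTop.atTop_mul_const (by positivity)
  obtain ⟨n, hn1, hn2⟩ := ((ht.eventually hmin).and (ht.eventually hUn)).exists
  have hpos : 0 < (Real.pi / 2 + n * (2 * Real.pi))⁻¹ := by positivity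
  have h3 := hle _ hn2
  rw [hf, if_neg hpos.ne', one_div, inv_inv, Real.sin_add_nat_mul_two_pi,
    Real.sin_pi_div_two] at h3
  simp only [h0] at hn1
  have := pow_pos hpos 2
  nlinarith

/-- For `f(x) = x² sin(1/x)` (with `f(0) = 0`), every `C²` upper barrier `h` at `0`
(i.e. `h 0 = 0` and `h ≥ f` on a neighborhood of `0`) satisfies `h''(0) ≥ 2`.
In particular, `f` does not satisfy `f''(0) ≤ 0` in the barrier sense: for `ε = 1`
there is no neighborhood `U` of `0` and `C²` function `h : U → ℝ` with `h 0 = f 0`,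
`h ≥ f` on `U` and `h''(0) ≤ 0 + 1`. -/
theorem not_barrier_second_deriv_nonpos_of_x_sq_sin_inv
    (f : ℝ → ℝ)
    (hf : ∀ x : ℝ, f x = if x = 0 then 0 else x ^ 2 * Real.sin (1 / x)) :
    (∀ (U : Set ℝ) (h : ℝ → ℝ), IsOpen U → (0 : ℝ) ∈ U → ContDiffOn ℝ 2 h U →
      h 0 = 0 → (∀ x ∈ U, f x ≤ h x) → 2 ≤ deriv (deriv h) 0) ∧
    ∃ ε : ℝ, 0 < ε ∧ ε = 1 ∧
      ¬ ∃ (U : Set ℝ) (h : ℝ → ℝ), IsOpen U ∧ (0 : ℝ) ∈ U ∧ ContDiffOn ℝ 2 h U ∧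
        h 0 = f 0 ∧ (∀ x ∈ U, f x ≤ h x) ∧ deriv (deriv h) 0 ≤ 0 + ε := by
  refine ⟨fun U h hU h0U hc h0 hle => barrier_aux f hf U h hU h0U hc h0 hle, 1, one_pos, rfl, ?_⟩
  rintro ⟨U, h, hU, h0U, hc, h0, hle, h2⟩
  have := barrier_aux f hf U h hU h0U hc (by rw [h0, hf]; simp) hle
  linarith
end

section
/- Let Ω ⊆ ℝⁿ be open, let f : Ω → ℝ be continuous, and let α : Ω → ℝ be smooth. If f satisfies Δf ≤ α at every point of Ω in the viscosity sense, then f satisfies Δf ≤ α on Ω in the distributional sense. -/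
open Finset

open MeasureTheory Topology Filter Laplacian FourierTransform
open scoped ContDiff SchwartzMap

lemma lapl_comp_toLp {n : ℕ} (V : EuclideanSpace ℝ (Fin n) → ℝ) (hV : ContDiff ℝ 2 V)
    (x : Fin n → ℝ) :
    lapl (fun y => V (WithLp.toLp 2 y)) x = Δ V (WithLp.toLp 2 x) := by
  rw [InnerProductSpace.laplacian_eq_iteratedFDeriv_orthonormalBasis V
    (EuclideanSpace.basisFun (Fin n) ℝ)]
  let L : (Fin n → ℝ) →L[ℝ] EuclideanSpace ℝ (Fin n) :=
    (EuclideanSpace.equiv (Fin n) ℝ).symm.toContinuousLinearMap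
  have hL : ∀ y, L y = WithLp.toLp 2 y := fun y => rfl
  have hd : Differentiable ℝ V := hV.differentiable (by norm_num)
  have hd2 : Differentiable ℝ (fderiv ℝ V) :=
    (hV.fderiv_right (m := 1) (by norm_num)).differentiable (by norm_num)
  unfold lapl hess2
  refine Finset.sum_congr rfl fun i _ => ?_
  have h1 : (fun y => fderiv ℝ (fun y => V (WithLp.toLp 2 y)) y (Pi.single i 1))
      = fun y => fderiv ℝ V (L y) (L (Pi.single i 1)) := by
    funext y
    have : HasFDerivAt (fun y => V (L y)) ((fderiv ℝ V (L y)).comp L) y :=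
      (hd (L y)).hasFDerivAt.comp y L.hasFDerivAt
    simp only [hL] at this ⊢
    rw [this.fderiv]; rfl
  rw [h1]
  have h2 : HasFDerivAt (fun y => fderiv ℝ V (L y)) ((fderiv ℝ (fderiv ℝ V) (L x)).comp L) x :=
    (hd2 (L x)).hasFDerivAt.comp x L.hasFDerivAt
  have h3 := h2.clm_apply (hasFDerivAt_const (L (Pi.single i 1)) x)
  rw [h3.fderiv]
  simp [iteratedFDeriv_two_apply, hL]

lemma schwartz_resolvent {n : ℕ} (l : ℝ) (hl : 0 < l) (b : 𝓢(EuclideanSpace ℝ (Fin n), ℂ)) :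
    ∃ u : 𝓢(EuclideanSpace ℝ (Fin n), ℂ), ∀ x, u x - l * Δ u x = b x := by
  let E := EuclideanSpace ℝ (Fin n)
  let c : ℝ := Real.sqrt l * (2 * Real.pi)
  let m : E → ℝ := fun x => (1 + ‖c • x‖ ^ 2) ^ (-1 : ℝ)
  have hm : m.HasTemperateGrowth :=
    (Function.hasTemperateGrowth_one_add_norm_sq_rpow E (-1)).comp
      (c • ContinuousLinearMap.id ℝ E).hasTemperateGrowth
  have hq : (fun x : E => ‖x‖ ^ 2).HasTemperateGrowth := Function.hasTemperateGrowth_norm_sq E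
  let w := 𝓕 b
  refine ⟨SchwartzMap.fourierMultiplierCLM ℂ m b, ?_⟩
  have key : SchwartzMap.fourierMultiplierCLM ℂ m b
      - l • Δ (SchwartzMap.fourierMultiplierCLM ℂ m b) = b := by
    rw [SchwartzMap.laplacian_eq_fourierMultiplierCLM,
      SchwartzMap.fourierMultiplierCLM_apply, SchwartzMap.fourierMultiplierCLM_apply,
      FourierTransform.fourier_fourierInv_eq]
    conv_rhs => rw [← FourierTransform.fourierInv_fourier_eq (F := 𝓢(EuclideanSpace ℝ (Fin n), ℂ)) b]
    have hlin : ∀ (A B : 𝓢(E, ℂ)) (r : ℝ), 𝓕⁻ A - r • 𝓕⁻ B = 𝓕⁻ (A - r • B) := by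
      intro A B r
      have := (fourierInvCLM ℝ 𝓢(E, ℂ)).map_sub A (r • B)
      rw [ContinuousLinearMap.map_smul] at this
      exact this.symm
    rw [smul_smul, hlin]
    congr 1
    ext x
    simp only [sub_apply, smul_apply]
    rw [SchwartzMap.smulLeftCLM_apply_apply hm, SchwartzMap.smulLeftCLM_apply_apply hq,
      SchwartzMap.smulLeftCLM_apply_apply hm]
    have h : m x - (l * (-(2 * Real.pi) ^ 2)) * (‖x‖ ^ 2 * m x) = 1 := by
      have h0 : m x = (1 + l * (2 * Real.pi)^2 * ‖x‖^2)⁻¹ := by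
        simp only [m, Real.rpow_neg_one, norm_smul, mul_pow, c, Real.norm_eq_abs, sq_abs,
          Real.sq_sqrt hl.le]
      have : 0 < 1 + l * (2 * Real.pi)^2 * ‖x‖^2 := by positivity
      rw [h0]; field_simp; ring
    rw [smul_smul, smul_smul, ← sub_smul, mul_assoc, h, one_smul]
  intro x
  have := congrArg (fun v : 𝓢(EuclideanSpace ℝ (Fin n), ℂ) => v x) key
  simpa using this

lemma resolvent_exists {n : ℕ} (l : ℝ) (hl : 0 < l) (b : (Fin n → ℝ) → ℝ)
    (hb : ContDiff ℝ ∞ b) (hbc : HasCompactSupport b) :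
    ∃ u : (Fin n → ℝ) → ℝ, ContDiff ℝ ∞ u ∧ Tendsto u (cocompact _) (𝓝 0) ∧
      ∀ x, u x - l * lapl u x = b x := by
  let L := (EuclideanSpace.equiv (Fin n) ℝ)
  let B : EuclideanSpace ℝ (Fin n) → ℂ := fun y => ((b (L y) : ℝ) : ℂ)
  have hB : ContDiff ℝ ∞ B := Complex.ofRealCLM.contDiff.comp (hb.comp L.contDiff)
  have hBc : HasCompactSupport B :=
    (hbc.comp_homeomorph L.toHomeomorph).comp_left (g := fun r : ℝ => (r : ℂ)) (by simp)
  obtain ⟨U, hU⟩ := schwartz_resolvent l hl (hBc.toSchwartzMap hB)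
  let V : EuclideanSpace ℝ (Fin n) → ℝ := Complex.reCLM ∘ U
  have hV : ContDiff ℝ ∞ V := Complex.reCLM.contDiff.comp (U.smooth ⊤)
  refine ⟨fun x => V (WithLp.toLp 2 x), hV.comp L.symm.contDiff, ?_, ?_⟩
  · have h1 : Tendsto (fun x => U (L.symm x)) (cocompact _) (𝓝 0) :=
      U.tendsto_cocompact.comp L.symm.toHomeomorph.isClosedEmbedding.tendsto_cocompact
    have := (Complex.continuous_re.tendsto 0).comp h1
    exact this
  · intro x
    rw [lapl_comp_toLp V (hV.of_le (WithTop.coe_le_coe.2 le_top))]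
    have h2 : Δ V (WithLp.toLp 2 x) = (Δ U (WithLp.toLp 2 x)).re := by
      rw [SchwartzMap.laplacian_apply]
      have : ContDiffAt ℝ 2 U (WithLp.toLp 2 x) := (U.smooth 2).contDiffAt
      exact this.laplacian_CLM_comp_left (l := Complex.reCLM)
    rw [h2]
    have h3 := congrArg Complex.re (hU (WithLp.toLp 2 x))
    have h4 : L (WithLp.toLp 2 x) = x := rfl
    simpa [V, B, h4] using h3

lemma contDiff_dir {n : ℕ} {u : (Fin n → ℝ) → ℝ} (hu : ContDiff ℝ ∞ u) (v : Fin n → ℝ) :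
    ContDiff ℝ ∞ (fun x => fderiv ℝ u x v) :=
  (hu.fderiv_right (m := ∞) (by simp)).clm_apply contDiff_const

lemma contDiff_lapl {n : ℕ} {u : (Fin n → ℝ) → ℝ} (hu : ContDiff ℝ ∞ u) :
    ContDiff ℝ ∞ (lapl u) := by
  unfold lapl hess2
  exact ContDiff.sum fun i _ => contDiff_dir (contDiff_dir hu _) _

lemma tsupport_dir {n : ℕ} (u : (Fin n → ℝ) → ℝ) (v : Fin n → ℝ) :
    tsupport (fun x => fderiv ℝ u x v) ⊆ tsupport u :=
  tsupport_fderiv_apply_subset ℝ v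

lemma lapl_eq_zero_of_notMem {n : ℕ} (u : (Fin n → ℝ) → ℝ) {x : Fin n → ℝ}
    (hx : x ∉ tsupport u) : lapl u x = 0 := by
  unfold lapl hess2
  refine Finset.sum_eq_zero fun i _ => ?_
  exact image_eq_zero_of_notMem_tsupport (f := fun x => fderiv ℝ
    (fun x => fderiv ℝ u x (Pi.single i 1)) x (Pi.single i 1))
    fun h => hx (tsupport_dir u _ (tsupport_dir _ _ h))

lemma hasCompactSupport_lapl {n : ℕ} {u : (Fin n → ℝ) → ℝ} (hu : HasCompactSupport u) :
    HasCompactSupport (lapl u) :=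
  HasCompactSupport.intro hu fun _ hx => lapl_eq_zero_of_notMem u hx

lemma lapl_sub_const {n : ℕ} (u : (Fin n → ℝ) → ℝ) (c : ℝ) (x : Fin n → ℝ) :
    lapl (fun y => u y - c) x = lapl u x := by
  simp only [lapl, hess2, fderiv_sub_const]

lemma lapl_sub_mul {n : ℕ} {u v : (Fin n → ℝ) → ℝ} (hu : ContDiff ℝ ∞ u) (hv : ContDiff ℝ ∞ v)
    (c : ℝ) (x : Fin n → ℝ) :
    lapl (fun y => u y - c * v y) x = lapl u x - c * lapl v x := by
  have key : ∀ {u v : (Fin n → ℝ) → ℝ}, ContDiff ℝ ∞ u → ContDiff ℝ ∞ v → ∀ w y,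
      fderiv ℝ (fun y => u y - c * v y) y w = fderiv ℝ u y w - c * fderiv ℝ v y w := by
    intro u v hu hv w y
    have h1 := (hu.differentiable (by simp) y).hasFDerivAt
    have h2 := (hv.differentiable (by simp) y).hasFDerivAt
    rw [(h1.fun_sub (h2.const_mul c)).fderiv]
    simp
  simp only [lapl, hess2, key hu hv]
  rw [Finset.mul_sum, ← Finset.sum_sub_distrib]
  exact Finset.sum_congr rfl fun i _ => key (contDiff_dir hu _) (contDiff_dir hv _) _ _

lemma deriv_deriv_nonpos_of_isLocalMax {g : ℝ → ℝ} {t : ℝ} (hc : ContinuousAt g t)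
    (h : IsLocalMax g t) : deriv (deriv g) t ≤ 0 := by
  by_contra! hpos
  have hmin := isLocalMin_of_deriv_deriv_pos hpos h.deriv_eq_zero hc
  have heq : g =ᶠ[𝓝 t] fun _ => g t := by
    filter_upwards [h, hmin] with y h1 h2 using le_antisymm h1 h2
  have h1 : deriv g =ᶠ[𝓝 t] fun _ => 0 := by
    have := heq.deriv
    simpa using this
  have h2 := h1.deriv_eq
  simp at h2
  linarith

lemma lapl_nonpos_of_isLocalMax {n : ℕ} {u : (Fin n → ℝ) → ℝ} (hu : ContDiff ℝ ∞ u)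
    {x : Fin n → ℝ} (h : IsLocalMax u x) : lapl u x ≤ 0 := by
  unfold lapl hess2
  refine Finset.sum_nonpos fun i _ => ?_
  set e : Fin n → ℝ := Pi.single i 1
  have hline : ∀ t : ℝ, HasDerivAt (fun t : ℝ => x + t • e) e t := fun t => by
    simpa using ((hasDerivAt_id t).smul_const e).const_add x
  have key : ∀ {w : (Fin n → ℝ) → ℝ}, ContDiff ℝ ∞ w → ∀ t : ℝ,
      deriv (fun t : ℝ => w (x + t • e)) t = fderiv ℝ w (x + t • e) e := by
    intro w hw t
    exact ((hw.differentiable (by simp) _).hasFDerivAt.comp_hasDerivAt t (hline t)).deriv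
  have hcont : Continuous (fun t : ℝ => x + t • e) := by fun_prop
  have hmax : IsLocalMax (fun t : ℝ => u (x + t • e)) 0 := by
    have : Tendsto (fun t : ℝ => x + t • e) (𝓝 0) (𝓝 x) := by
      simpa using hcont.tendsto 0
    have h3 := this.eventually h
    simpa [IsLocalMax, IsMaxFilter] using h3
  have := deriv_deriv_nonpos_of_isLocalMax (hu.continuous.comp hcont).continuousAt hmax
  have h1 : deriv (fun t : ℝ => u (x + t • e)) = fun t => fderiv ℝ u (x + t • e) e :=
    funext fun t => key hu t
  have h2 := key (contDiff_dir hu e) 0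
  simp only [zero_smul, add_zero] at h2
  rw [← h2, ← h1]
  exact this

lemma integral_lapl {n : ℕ} {u φ : (Fin n → ℝ) → ℝ} (hu : ContDiff ℝ ∞ u) (hφ : ContDiff ℝ ∞ φ)
    (hc : HasCompactSupport φ) : ∫ x, u x * lapl φ x = ∫ x, lapl u x * φ x := by
  have hcd : ∀ {w : (Fin n → ℝ) → ℝ} (v), HasCompactSupport w →
      HasCompactSupport (fun x => fderiv ℝ w x v) := fun v hw => hw.fderiv_apply ℝ v
  have key : ∀ {w ψ : (Fin n → ℝ) → ℝ}, ContDiff ℝ ∞ w → ContDiff ℝ ∞ ψ →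
      HasCompactSupport ψ → ∀ v, ∫ x, w x * fderiv ℝ ψ x v = - ∫ x, fderiv ℝ w x v * ψ x := by
    intro w ψ hw hψ hc v
    apply integral_mul_fderiv_eq_neg_fderiv_mul_of_integrable
    · exact ((contDiff_dir hw v).continuous.mul hψ.continuous).integrable_of_hasCompactSupport
        hc.mul_left
    · exact (hw.continuous.mul (contDiff_dir hψ v).continuous).integrable_of_hasCompactSupport
        (hcd v hc).mul_left
    · exact (hw.continuous.mul hψ.continuous).integrable_of_hasCompactSupport hc.mul_left
    · exact fun x _ => hw.differentiable (by simp) x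
    · exact fun x _ => hψ.differentiable (by simp) x
  simp only [lapl, hess2, Finset.mul_sum, Finset.sum_mul]
  rw [integral_finsetSum, integral_finsetSum]
  · refine Finset.sum_congr rfl fun i _ => ?_
    rw [key hu (contDiff_dir hφ _) (hcd _ hc), ← neg_eq_iff_eq_neg.2
      (key (contDiff_dir hu _) hφ hc _)]
  · intro i _
    exact ((contDiff_dir (contDiff_dir hu _) _).continuous.mul
      hφ.continuous).integrable_of_hasCompactSupport hc.mul_left
  · intro i _
    exact (hu.continuous.mul
      (contDiff_dir (contDiff_dir hφ _) _).continuous).integrable_of_hasCompactSupport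
      (hcd _ (hcd _ hc)).mul_left

lemma max_principle {n : ℕ} {v : (Fin n → ℝ) → ℝ} (hv : ContDiff ℝ ∞ v)
    (h0 : Tendsto v (cocompact _) (𝓝 0)) {l c : ℝ} (hl : 0 < l) (hc : 0 ≤ c)
    (h : ∀ x, v x - l * lapl v x ≤ c) (x : Fin n → ℝ) : v x ≤ c := by
  by_contra! hx
  have hev : ∀ᶠ y in cocompact _, v y ≤ v x :=
    (h0.eventually (gt_mem_nhds (hc.trans_lt hx))).mono fun y hy => le_of_lt hy
  obtain ⟨z, hz⟩ := hv.continuous.exists_forall_ge' x hev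
  have h1 : lapl v z ≤ 0 := lapl_nonpos_of_isLocalMax hv (Eventually.of_forall hz)
  have h2 := h z
  have h3 := hz x
  nlinarith

lemma integrable_mul_of_support {n : ℕ} {S : Set (Fin n → ℝ)} (hS : IsCompact S)
    {g ψ : (Fin n → ℝ) → ℝ} (hg : ContinuousOn g S) (hψ : Continuous ψ)
    (h0 : ∀ x, x ∉ S → ψ x = 0) : Integrable (fun x => g x * ψ x) := by
  have h1 : IntegrableOn (fun x => g x * ψ x) S :=
    (hg.mul hψ.continuousOn).integrableOn_compact hS
  refine (integrableOn_iff_integrable_of_support_subset ?_).1 h1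
  intro x hx
  by_contra hxS
  exact hx (by simp [h0 x hxS])

lemma core_step {n : ℕ} (Ω : Set (Fin n → ℝ)) (f α : (Fin n → ℝ) → ℝ)
    (hvisc : ∀ p ∈ Ω, ∀ (U : Set (Fin n → ℝ)) (h : (Fin n → ℝ) → ℝ),
      IsOpen U → p ∈ U → U ⊆ Ω → ContDiffOn ℝ 2 h U → h p = f p →
      (∀ x ∈ U, h x ≤ f x) → lapl h p ≤ α p)
    (S K : Set (Fin n → ℝ)) (hS : IsCompact S) (hSΩ : S ⊆ Ω) (hKS : K ⊆ S)
    (hf : ContinuousOn f S) (hα : ContinuousOn α S) (hf1 : ∀ x ∈ S, 1 ≤ f x)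
    (η : (Fin n → ℝ) → ℝ) (hη : ContDiff ℝ ∞ η) (hηc : HasCompactSupport η)
    (hη0 : ∀ x, 0 ≤ η x) (hη1 : ∀ x, η x ≤ 1) (hηS : ∀ x, x ∉ interior S → η x = 0)
    (hηK : ∀ x ∈ K, η x = 1)
    (F A L : ℝ) (hF : ∀ x ∈ S, |f x| ≤ F) (hA : ∀ x ∈ S, |α x| ≤ A)
    (hL : ∀ x, |lapl η x| ≤ L) (hF0 : 0 ≤ F) (hA0 : 0 ≤ A)
    (l : ℝ) (hl : 0 < l) (hl1 : l ≤ 1) (hlA : l * A ≤ 1) (hlL : l * ((F + A + 1) * L) ≤ 1) :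
    ∃ u H : (Fin n → ℝ) → ℝ, ContDiff ℝ ∞ u ∧ ContDiff ℝ ∞ H ∧ (∀ x, |u x| ≤ F + A + 1) ∧
      (∀ x ∈ S, |H x - (f x - l * α x)| ≤ l ^ 2) ∧
      (∀ x ∈ K, u x - l * lapl u x = H x) ∧ (∀ x ∈ K, lapl u x ≤ α x + 2 * l) := by
  obtain ⟨H, hH, hHf⟩ : ∃ H : (Fin n → ℝ) → ℝ, ContDiff ℝ ∞ H ∧
      ∀ x ∈ S, |H x - (f x - l * α x)| ≤ l ^ 2 := by
    have hcont : ContinuousOn (fun x => f x - l * α x) S := hf.sub (continuousOn_const.mul hα)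
    obtain ⟨g, hg⟩ := ContinuousMap.exists_restrict_eq hS.isClosed
      (⟨S.domRestrict (fun x => f x - l * α x), hcont.domRestrict⟩ : C(S, ℝ))
    have hdense := ContinuousMap.dense_setOfPred_contDiff (E := Fin n → ℝ) (F := ℝ) g
    rw [mem_closure_iff_nhds_basis
      (nhds_basis_uniformity Metric.uniformity_basis_dist.compactConvergenceUniformity)] at hdense
    obtain ⟨H, hH, hHg⟩ := hdense (S, l ^ 2) ⟨hS, by positivity⟩
    refine ⟨H, hH, fun x hx => ?_⟩
    have h1 : g x = f x - l * α x := by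
      have := DFunLike.congr_fun hg (⟨x, hx⟩ : S)
      exact this
    have h2 := hHg x hx
    rw [← h1]
    simp only [Set.mem_ofPred_eq, Real.dist_eq] at h2
    exact h2.le
  set C := F + A + 1 with hC
  have hC0 : 0 ≤ C := by positivity
  have hl2 : l ^ 2 ≤ 1 := by nlinarith
  have hlA' : ∀ x ∈ S, |l * α x| ≤ A ∧ l * α x ≤ 1 := by
    intro x hx
    have h1 : |l * α x| ≤ l * A := by
      rw [abs_mul, abs_of_pos hl]; exact mul_le_mul_of_nonneg_left (hA x hx) hl.le
    exact ⟨by nlinarith, (le_abs_self _).trans (by linarith)⟩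
  have hHC : ∀ x ∈ S, |H x| ≤ C := by
    intro x hx
    have h1 := abs_le.1 (hHf x hx)
    have h2 := abs_le.1 (hF x hx)
    have h3 := abs_le.1 (hlA' x hx).1
    exact abs_le.2 ⟨by linarith, by linarith⟩
  have hbC : ∀ x, |η x * H x| ≤ C * η x := by
    intro x
    by_cases hx : x ∈ S
    · rw [abs_mul, abs_of_nonneg (hη0 x), mul_comm]
      exact mul_le_mul_of_nonneg_right (hHC x hx) (hη0 x)
    · simp [hηS x (fun h => hx (interior_subset h))]
  obtain ⟨u, hu, hu0, hueq⟩ := resolvent_exists l hl (fun x => η x * H x) (hη.mul hH)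
    hηc.mul_right
  have hηt : Tendsto η (cocompact _) (𝓝 0) := by
    have h1 : ∀ᶠ x in cocompact (Fin n → ℝ), 0 = η x := by
      filter_upwards [hηc.compl_mem_cocompact] with x hx
      exact (image_eq_zero_of_notMem_tsupport hx).symm
    exact tendsto_const_nhds.congr' h1
  have hzero : ∀ x, lapl (fun _ : Fin n → ℝ => (0 : ℝ)) x = 0 := by
    intro x; simp [lapl, hess2]
  have hle : ∀ x, u x ≤ C := by
    refine max_principle hu hu0 hl hC0 fun x => ?_
    rw [hueq]
    have := (abs_le.1 (hbC x)).2
    nlinarith [hη1 x]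
  have hge : ∀ x, 0 - 1 * u x ≤ C := by
    refine max_principle (v := fun x => 0 - 1 * u x) (contDiff_const.sub (contDiff_const.mul hu))
      (by simpa using hu0.neg) hl hC0 fun x => ?_
    rw [lapl_sub_mul contDiff_const hu, hzero]
    have h1 := (abs_le.1 (hbC x)).1
    have h2 := hueq x
    have h3 : C * η x ≤ C := by nlinarith [hη1 x]
    linarith
  have hbd : ∀ x, u x - C * η x ≤ 1 := by
    refine max_principle (v := fun x => u x - C * η x) (hu.sub (contDiff_const.mul hη))
      (by simpa using hu0.sub (hηt.const_mul C)) hl zero_le_one fun x => ?_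
    rw [lapl_sub_mul hu hη]
    have h1 := (abs_le.1 (hbC x)).2
    have h2 := hueq x
    have h3 : C * lapl η x ≤ C * L := mul_le_mul_of_nonneg_left ((le_abs_self _).trans (hL x)) hC0
    have h4 : l * (C * lapl η x) ≤ l * (C * L) := mul_le_mul_of_nonneg_left h3 hl.le
    linarith
  have huf : ∀ x ∈ S, u x - f x ≤ l ^ 2 := by
    intro x hx
    obtain ⟨z, hzS, hz⟩ := hS.exists_isMaxOn ⟨x, hx⟩ (hu.continuous.continuousOn.sub hf)
    have hz' : ∀ y ∈ S, u y - f y ≤ u z - f z := fun y hy => hz hy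
    refine (hz' x hx).trans ?_
    by_cases hzi : z ∈ interior S
    · have hv := hvisc z (hSΩ hzS) (interior S) (fun y => u y - (u z - f z)) isOpen_interior hzi
        (interior_subset.trans hSΩ)
        ((hu.of_le (WithTop.coe_le_coe.2 le_top)).sub contDiff_const).contDiffOn (by ring)
        (fun y hy => by have := hz' y (interior_subset hy); linarith)
      rw [lapl_sub_const] at hv
      have h1 := hueq z
      have h2 := (abs_le.1 (hHf z hzS)).2
      have h3 := (hlA' z hzS).2
      have h4 := hf1 z hzS
      have h5 : l * lapl u z ≤ l * α z := mul_le_mul_of_nonneg_left hv hl.le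
      have h6 : η z * H z ≤ η z * (f z - l * α z + l ^ 2) :=
        mul_le_mul_of_nonneg_left (by linarith) (hη0 z)
      have h7 : 0 ≤ (1 - η z) * (f z - l * α z) :=
        mul_nonneg (by linarith [hη1 z]) (by linarith)
      have h8 : η z * l ^ 2 ≤ l ^ 2 := by nlinarith [hη1 z, sq_nonneg l]
      nlinarith
    · have h1 := hbd z
      rw [hηS z hzi] at h1
      have h2 := hf1 z hzS
      have := sq_nonneg l
      linarith
  refine ⟨u, H, hu, hH, fun x => abs_le.2 ⟨by linarith [hge x], hle x⟩, hHf, ?_, ?_⟩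
  · intro x hx
    have := hueq x
    simpa [hηK x hx] using this
  · intro x hx
    have h1 := hueq x
    simp only [hηK x hx, one_mul] at h1
    have h2 := huf x (hKS hx)
    have h3 := (abs_le.1 (hHf x (hKS hx))).1
    have h4 : l * lapl u x ≤ l * (α x + 2 * l) := by nlinarith
    exact le_of_mul_le_mul_left h4 hl

lemma core {n : ℕ} (Ω : Set (Fin n → ℝ)) (f α : (Fin n → ℝ) → ℝ)
    (hvisc : ∀ p ∈ Ω, ∀ (U : Set (Fin n → ℝ)) (h : (Fin n → ℝ) → ℝ),
      IsOpen U → p ∈ U → U ⊆ Ω → ContDiffOn ℝ 2 h U → h p = f p →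
      (∀ x ∈ U, h x ≤ f x) → lapl h p ≤ α p)
    (S : Set (Fin n → ℝ)) (hS : IsCompact S) (hSΩ : S ⊆ Ω)
    (hf : ContinuousOn f S) (hα : ContinuousOn α S) (hf1 : ∀ x ∈ S, 1 ≤ f x)
    (φ : (Fin n → ℝ) → ℝ) (hφ : ContDiff ℝ ∞ φ) (hφc : HasCompactSupport φ)
    (hφS : tsupport φ ⊆ interior S) (hφ0 : ∀ x, 0 ≤ φ x) :
    ∫ x, f x * lapl φ x ≤ ∫ x, α x * φ x := by
  have hKS : tsupport φ ⊆ S := hφS.trans interior_subset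
  obtain ⟨η, hη, hη0, hη1, hηS, hηK⟩ : ∃ η : (Fin n → ℝ) → ℝ, ContDiff ℝ ∞ η ∧
      (∀ x, 0 ≤ η x) ∧ (∀ x, η x ≤ 1) ∧ (∀ x, x ∉ interior S → η x = 0) ∧
      (∀ x ∈ tsupport φ, η x = 1) := by
    obtain ⟨η, h0, h1, h2⟩ := exists_contMDiffMap_zero_one_of_isClosed
      (modelWithCornersSelf ℝ (Fin n → ℝ)) (n := ⊤)
      (isOpen_interior (s := S)).isClosed_compl (isClosed_tsupport φ)
      (by rw [← Set.subset_compl_iff_disjoint_left, compl_compl]; exact hφS)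
    exact ⟨η, η.contMDiff.contDiff, fun x => (h2 x).1, fun x => (h2 x).2,
      fun x hx => h0 hx, fun x hx => h1 hx⟩
  have hηc : HasCompactSupport η :=
    HasCompactSupport.intro hS fun x hx => hηS x fun h => hx (interior_subset h)
  obtain ⟨F, hF⟩ := hS.exists_bound_of_continuousOn hf
  obtain ⟨A, hA⟩ := hS.exists_bound_of_continuousOn hα
  obtain ⟨L, hL⟩ := (hasCompactSupport_lapl hηc).exists_bound_of_continuous
    (contDiff_lapl hη).continuous
  simp only [Real.norm_eq_abs] at hF hA hL
  have hL0 : 0 ≤ L := (abs_nonneg _).trans (hL 0)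
  set F' := max F 0
  set A' := max A 0
  have hF0 : 0 ≤ F' := le_max_right _ _
  have hA0 : 0 ≤ A' := le_max_right _ _
  set C := F' + A' + 1
  set ψ := lapl φ with hψdef
  have hψ : ContDiff ℝ ∞ ψ := contDiff_lapl hφ
  have hψc : HasCompactSupport ψ := hasCompactSupport_lapl hφc
  have hψ0 : ∀ x, x ∉ tsupport φ → ψ x = 0 := fun x hx => lapl_eq_zero_of_notMem φ hx
  have hφz : ∀ x, x ∉ tsupport φ → φ x = 0 := fun x hx => image_eq_zero_of_notMem_tsupport hx
  have hψS : ∀ x, x ∉ S → ψ x = 0 := fun x hx => hψ0 x fun h => hx (hKS h)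
  have hφSz : ∀ x, x ∉ S → φ x = 0 := fun x hx => hφz x fun h => hx (hKS h)
  have hψi : Integrable (fun x => |ψ x|) :=
    (hψ.continuous.integrable_of_hasCompactSupport hψc).abs
  have hΔψi : Integrable (fun x => |lapl ψ x|) :=
    ((contDiff_lapl hψ).continuous.integrable_of_hasCompactSupport
      (hasCompactSupport_lapl hψc)).abs
  have hφi : Integrable φ := hφ.continuous.integrable_of_hasCompactSupport hφc
  have hαφ : Integrable (fun x => α x * φ x) :=
    integrable_mul_of_support hS hα hφ.continuous hφSz
  set D := 2 * (∫ x, φ x) + (A' + 1) * (∫ x, |ψ x|) + C * ∫ x, |lapl ψ x| with hD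
  have hD0 : 0 ≤ D := by
    have h1 : 0 ≤ ∫ x, φ x := integral_nonneg hφ0
    have h2 : 0 ≤ ∫ x, |ψ x| := integral_nonneg fun x => abs_nonneg _
    have h3 : 0 ≤ ∫ x, |lapl ψ x| := integral_nonneg fun x => abs_nonneg _
    positivity
  have main : ∀ l : ℝ, 0 < l → l ≤ 1 → l * A' ≤ 1 → l * (C * L) ≤ 1 →
      ∫ x, f x * ψ x ≤ (∫ x, α x * φ x) + l * D := by
    intro l hl hl1 hlA hlL
    obtain ⟨u, H, hu, hH, huC, hHf, hueq, hul⟩ := core_step Ω f α hvisc S (tsupport φ) hS hSΩ hKS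
      hf hα hf1 η hη hηc hη0 hη1 hηS hηK F' A' L
      (fun x hx => (hF x hx).trans (le_max_left _ _))
      (fun x hx => (hA x hx).trans (le_max_left _ _)) hL hF0 hA0 l hl hl1 hlA hlL
    have e1 : ∫ x, u x * ψ x ≤ (∫ x, α x * φ x) + 2 * l * ∫ x, φ x := by
      rw [hψdef, integral_lapl hu hφ hφc, ← integral_const_mul,
        ← integral_add hαφ (hφi.const_mul _)]
      refine integral_mono ?_ (hαφ.add (hφi.const_mul _)) fun x => ?_
      · exact ((contDiff_lapl hu).continuous.mul
          hφ.continuous).integrable_of_hasCompactSupport hφc.mul_left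
      · by_cases hx : x ∈ tsupport φ
        · have := mul_le_mul_of_nonneg_right (hul x hx) (hφ0 x)
          linarith
        · simp [hφz x hx]
    have hi1 : Integrable (fun x => (f x - H x) * ψ x) :=
      integrable_mul_of_support hS (hf.sub hH.continuous.continuousOn) hψ.continuous hψS
    have hi2 : Integrable (fun x => u x * ψ x) :=
      (hu.continuous.mul hψ.continuous).integrable_of_hasCompactSupport hψc.mul_left
    have hi3 : Integrable (fun x => lapl u x * ψ x) :=
      ((contDiff_lapl hu).continuous.mul hψ.continuous).integrable_of_hasCompactSupport
        hψc.mul_left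
    have hi4 : Integrable (fun x => u x * lapl ψ x) :=
      (hu.continuous.mul (contDiff_lapl hψ).continuous).integrable_of_hasCompactSupport
        (hasCompactSupport_lapl hψc).mul_left
    have hi5 : Integrable (fun x => u x * ψ x + (f x - H x) * ψ x) := hi2.add hi1
    have e2 : ∫ x, f x * ψ x = (∫ x, u x * ψ x) + (∫ x, (f x - H x) * ψ x)
        - l * ∫ x, lapl u x * ψ x := by
      rw [← integral_const_mul, ← integral_add hi2 hi1, ← integral_sub hi5 (hi3.const_mul l)]
      refine integral_congr_ae (Eventually.of_forall fun x => ?_)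
      by_cases hx : x ∈ tsupport φ
      · have := hueq x hx
        simp only [← this]
        ring
      · simp [hψ0 x hx]
    have e3 : ∫ x, (f x - H x) * ψ x ≤ l * (A' + 1) * ∫ x, |ψ x| := by
      rw [← integral_const_mul]
      refine integral_mono hi1 (hψi.const_mul _) fun x => ?_
      by_cases hx : x ∈ S
      · have h1 := abs_le.1 (hHf x hx)
        have h2 := abs_le.1 ((hA x hx).trans (le_max_left A 0))
        have h3 : |f x - H x| ≤ l * (A' + 1) := by
          rw [abs_le]
          constructor <;> nlinarith
        calc (f x - H x) * ψ x ≤ |f x - H x| * |ψ x| := by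
              rw [← abs_mul]; exact le_abs_self _
          _ ≤ _ := mul_le_mul_of_nonneg_right h3 (abs_nonneg _)
      · simp [hψS x hx]
    have e4 : -(∫ x, lapl u x * ψ x) ≤ C * ∫ x, |lapl ψ x| := by
      rw [← integral_lapl hu hψ hψc, ← integral_const_mul, ← integral_neg]
      refine integral_mono hi4.neg (hΔψi.const_mul _) fun x => ?_
      calc -(u x * lapl ψ x) ≤ |u x| * |lapl ψ x| := by
            rw [← abs_mul]; exact neg_le_abs _
        _ ≤ _ := mul_le_mul_of_nonneg_right (huC x) (abs_nonneg _)
    have e5 := mul_le_mul_of_nonneg_left e4 hl.le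
    rw [e2, hD]
    linarith
  refine le_of_forall_pos_le_add fun ε hε => ?_
  have hC0 : 0 ≤ C := by positivity
  have hCL : 0 ≤ C * L := mul_nonneg hC0 hL0
  set Q := 1 + A' + C * L + D / ε with hQ
  have hDε : 0 ≤ D / ε := by positivity
  have hQ1 : 0 < Q := by positivity
  have hm : ∀ t, t ≤ Q → Q⁻¹ * t ≤ 1 := fun t ht => by
    rw [inv_mul_le_iff₀ hQ1]; linarith
  have h := main Q⁻¹ (inv_pos.2 hQ1) (by simpa using hm 1 (by linarith)) (hm _ (by linarith))
    (hm _ (by linarith))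
  have h2 := hm (D / ε) (by linarith)
  have h3 : Q⁻¹ * D ≤ ε := by
    rw [← mul_div_assoc, div_le_one hε] at h2
    exact h2
  linarith

/-- If `Δ f ≤ α` holds at every point of `Ω` in the viscosity sense, then it holds on `Ω`
in the distributional sense. -/
theorem viscosity_implies_distributional_laplacian {n : ℕ}
    (Ω : Set (Fin n → ℝ)) (hΩ : IsOpen Ω)
    (f : (Fin n → ℝ) → ℝ) (hf : ContinuousOn f Ω)
    (α : (Fin n → ℝ) → ℝ) (hα : ContDiffOn ℝ (⊤ : ℕ∞) α Ω)
    (hvisc : ∀ p ∈ Ω, ∀ (U : Set (Fin n → ℝ)) (h : (Fin n → ℝ) → ℝ),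
      IsOpen U → p ∈ U → U ⊆ Ω → ContDiffOn ℝ 2 h U → h p = f p →
      (∀ x ∈ U, h x ≤ f x) → lapl h p ≤ α p) :
    ∀ φ : (Fin n → ℝ) → ℝ, ContDiff ℝ (⊤ : ℕ∞) φ → HasCompactSupport φ → tsupport φ ⊆ Ω →
      (∀ x, 0 ≤ φ x) →
      ∫ x in Ω, f x * lapl φ x ≤ ∫ x in Ω, α x * φ x := by
  intro φ hφ hφc hφΩ hφ0
  obtain ⟨S, hS, hφS, hSΩ⟩ := exists_compact_between hφc hΩ hφΩ
  have hfS := hf.mono hSΩ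
  obtain ⟨F, hF⟩ := hS.exists_bound_of_continuousOn hfS
  have hKS : tsupport φ ⊆ S := hφS.trans interior_subset
  have hψ0 : ∀ x, x ∉ S → lapl φ x = 0 :=
    fun x hx => lapl_eq_zero_of_notMem φ fun h => hx (hKS h)
  have hφz : ∀ x, x ∉ S → φ x = 0 :=
    fun x hx => image_eq_zero_of_notMem_tsupport fun h => hx (hKS h)
  rw [setIntegral_eq_integral_of_forall_compl_eq_zero
      (fun x hx => by simp [hψ0 x fun h => hx (hSΩ h)]),
    setIntegral_eq_integral_of_forall_compl_eq_zero
      (fun x hx => by simp [hφz x fun h => hx (hSΩ h)])]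
  have hc := core Ω (fun x => f x + (F + 1)) α ?_ S hS hSΩ (hfS.add continuousOn_const)
    (hα.continuousOn.mono hSΩ) ?_ φ hφ hφc hφS hφ0
  · have h1 : Integrable (fun x => f x * lapl φ x) :=
      integrable_mul_of_support hS hfS (contDiff_lapl hφ).continuous hψ0
    have h2 : Integrable (lapl φ) :=
      (contDiff_lapl hφ).continuous.integrable_of_hasCompactSupport (hasCompactSupport_lapl hφc)
    have h3 : ∫ x, (F + 1) * lapl φ x = 0 := by
      rw [integral_lapl (u := fun _ => F + 1) contDiff_const hφ hφc]
      simp [lapl, hess2]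
    simp only [add_mul _ (F + 1)] at hc
    rw [integral_add h1 (h2.const_mul _), h3, add_zero] at hc
    exact hc
  · intro p hp U h hU hpU hUΩ hh hhp hle
    have := hvisc p hp U (fun y => h y - (F + 1)) hU hpU hUΩ (hh.sub contDiffOn_const)
      (by simp [hhp]) (fun x hx => by have := hle x hx; linarith)
    rwa [lapl_sub_const] at this
  · intro x hx
    have := hF x hx
    rw [Real.norm_eq_abs, abs_le] at this
    linarith
end

section
/- Let Ω ⊆ ℝⁿ be open, let f : Ω → ℝ be continuous, and let α : Ω → ℝ be smooth. If f satisfies Δf ≤ α on Ω in the distributional sense, then f satisfies Δf ≤ α at every point of Ω in the viscosity sense. -/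
open Finset

section Aux

open MeasureTheory Filter Topology

lemma aux_D_contDiffAt {n : ℕ} {u : (Fin n → ℝ) → ℝ} {x : Fin n → ℝ} (hu : ContDiffAt ℝ 2 u x)
    (v : Fin n → ℝ) : ContDiffAt ℝ 1 (fun y => fderiv ℝ u y v) x := by
  have h1 : ContDiffAt ℝ 1 (fderiv ℝ u) x := hu.fderiv_right (m := 1) (by norm_num)
  exact h1.clm_apply contDiffAt_const

lemma aux_hess_nonneg {n : ℕ} {u : (Fin n → ℝ) → ℝ} {x : Fin n → ℝ} (hu : ContDiffAt ℝ 2 u x)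
    (hm : IsLocalMin u x) (i : Fin n) : 0 ≤ hess2 u x i i := by
  set e : Fin n → ℝ := Pi.single i 1 with he
  set l : ℝ → (Fin n → ℝ) := fun t => x + t • e with hl
  have hl0 : l 0 = x := by simp [hl]
  have hld : ∀ t, HasDerivAt l e t := by
    intro t
    have := ((hasDerivAt_id t).smul_const e).const_add x
    simpa [hl] using this
  have hlc : ContinuousAt l 0 := (hld 0).continuousAt
  have hlt : Tendsto l (𝓝 0) (𝓝 x) := by simpa [ContinuousAt, hl0] using hlc
  set g : ℝ → ℝ := fun t => u (l t) with hg
  have hev : ∀ᶠ y in 𝓝 x, DifferentiableAt ℝ u y := by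
    have := hu.eventually (by simp)
    filter_upwards [this] with y hy using hy.differentiableAt (by norm_num)
  have hdg : deriv g =ᶠ[𝓝 0] fun t => fderiv ℝ u (l t) e := by
    filter_upwards [hlt.eventually hev] with t ht
    exact (ht.hasFDerivAt.comp_hasDerivAt t (hld t)).deriv
  have hmin : IsLocalMin g 0 := by
    have := hlt.eventually hm
    filter_upwards [this] with t ht
    simpa [hg, hl0] using ht
  have hdd : deriv (deriv g) 0 = hess2 u x i i := by
    rw [hdg.deriv_eq]
    have h1 : DifferentiableAt ℝ (fun y => fderiv ℝ u y e) (l 0) := by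
      rw [hl0]; exact (aux_D_contDiffAt hu e).differentiableAt (by norm_num)
    have := (h1.hasFDerivAt.comp_hasDerivAt (0:ℝ) (hld 0)).deriv
    rw [hl0] at this
    exact this
  rw [← hdd]
  by_contra hneg
  push Not at hneg
  have hgc : ContinuousAt g 0 := by
    have : ContinuousAt u (l 0) := by rw [hl0]; exact hu.continuousAt
    exact ContinuousAt.comp this hlc
  have hmax := isLocalMax_of_deriv_deriv_neg hneg hmin.deriv_eq_zero hgc
  have hconst : g =ᶠ[𝓝 0] fun _ => g 0 := by
    filter_upwards [hmin, hmax] with t h1 h2 using le_antisymm h2 h1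
  have h0 : deriv (deriv g) 0 = 0 := by
    rw [hconst.deriv.deriv_eq]; simp
  linarith

lemma aux_lapl_nonneg {n : ℕ} {u : (Fin n → ℝ) → ℝ} {x : Fin n → ℝ} (hu : ContDiffAt ℝ 2 u x)
    (hm : IsLocalMin u x) : 0 ≤ lapl u x :=
  Finset.sum_nonneg fun i _ => aux_hess_nonneg hu hm i

lemma aux_hess_add {n : ℕ} {u v : (Fin n → ℝ) → ℝ} {x : Fin n → ℝ} (c : ℝ)
    (hu : ContDiffAt ℝ 2 u x) (hv : ContDiffAt ℝ 2 v x) (i : Fin n) :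
    hess2 (fun y => u y + c * v y) x i i = hess2 u x i i + c * hess2 v x i i := by
  have h1 : (fun y => fderiv ℝ (fun y => u y + c * v y) y (Pi.single i 1)) =ᶠ[𝓝 x]
      fun y => fderiv ℝ u y (Pi.single i 1) + c * fderiv ℝ v y (Pi.single i 1) := by
    filter_upwards [hu.eventually (by simp), hv.eventually (by simp)] with y h1 h2
    have h1' := (h1.differentiableAt (by norm_num)).hasFDerivAt
    have h2' := (h2.differentiableAt (by norm_num)).hasFDerivAt
    rw [(h1'.fun_add (h2'.const_mul c)).fderiv]
    simp
  unfold hess2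
  rw [h1.fderiv_eq]
  have h1' := ((aux_D_contDiffAt hu (Pi.single i 1)).differentiableAt (by norm_num)).hasFDerivAt
  have h2' := ((aux_D_contDiffAt hv (Pi.single i 1)).differentiableAt (by norm_num)).hasFDerivAt
  rw [(h1'.fun_add (h2'.const_mul c)).fderiv]
  simp

lemma aux_lapl_add {n : ℕ} {u v : (Fin n → ℝ) → ℝ} {x : Fin n → ℝ} (c : ℝ)
    (hu : ContDiffAt ℝ 2 u x) (hv : ContDiffAt ℝ 2 v x) :
    lapl (fun y => u y + c * v y) x = lapl u x + c * lapl v x := by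
  unfold lapl
  rw [Finset.mul_sum, ← Finset.sum_add_distrib]
  exact Finset.sum_congr rfl fun i _ => aux_hess_add c hu hv i

lemma aux_lapl_sq {n : ℕ} (p x : Fin n → ℝ) :
    lapl (fun y => ∑ j, (y j - p j) ^ 2) x = 2 * n := by
  have h1 : ∀ i : Fin n, (fun y => fderiv ℝ (fun y : Fin n → ℝ => ∑ j, (y j - p j) ^ 2) y
      (Pi.single i 1)) = fun y => 2 * (y i - p i) := by
    intro i
    funext y
    have : HasFDerivAt (fun y : Fin n → ℝ => ∑ j, (y j - p j) ^ 2)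
        (∑ j, (2 * (y j - p j)) • (ContinuousLinearMap.proj j : (Fin n → ℝ) →L[ℝ] ℝ)) y := by
      apply HasFDerivAt.fun_sum
      intro j _
      have := ((hasFDerivAt_apply (𝕜 := ℝ) (F' := fun _ : Fin n => ℝ) j y).sub_const (p j)).pow 2
      simpa using this
    rw [this.fderiv]
    simp [Pi.single_apply]
  unfold lapl hess2
  simp_rw [h1]
  have h2 : ∀ i : Fin n, fderiv ℝ (fun y : Fin n → ℝ => 2 * (y i - p i)) x (Pi.single i 1) = 2 := by
    intro i
    have := ((hasFDerivAt_apply (𝕜 := ℝ) (F' := fun _ : Fin n => ℝ) i x).sub_const (p i)).const_mul 2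
    rw [this.fderiv]
    simp
  simp_rw [h2]
  simp [mul_comm]

lemma aux_lapl_cont {n : ℕ} {u : (Fin n → ℝ) → ℝ} {x : Fin n → ℝ} (hu : ContDiffAt ℝ 2 u x) :
    ContinuousAt (lapl u) x := by
  unfold lapl hess2
  apply tendsto_finsetSum
  intro i _
  have h := (aux_D_contDiffAt hu (Pi.single i 1)).fderiv_right (m := 0) (by norm_num)
  exact (h.clm_apply contDiffAt_const).continuousAt

lemma aux_fderiv_refl {n : ℕ} {g : (Fin n → ℝ) → ℝ} (hg : Differentiable ℝ g)
    (x y v : Fin n → ℝ) :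
    fderiv ℝ (fun z => g (x - z)) y v = - fderiv ℝ g (x - y) v := by
  have := ((hg (x - y)).hasFDerivAt).comp y ((hasFDerivAt_id y).const_sub x)
  have h2 : fderiv ℝ (fun z => g (x - z)) y = _ := this.fderiv
  rw [h2]; simp

lemma aux_lapl_refl {n : ℕ} {g : (Fin n → ℝ) → ℝ} (hg : ContDiff ℝ 2 g) (x y : Fin n → ℝ) :
    lapl (fun z => g (x - z)) y = lapl g (x - y) := by
  unfold lapl hess2
  refine Finset.sum_congr rfl fun i _ => ?_
  simp_rw [aux_fderiv_refl (hg.differentiable (by norm_num))]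
  have h1 : Differentiable ℝ (fun z => fderiv ℝ g z (Pi.single i 1)) := fun z =>
    (aux_D_contDiffAt hg.contDiffAt _).differentiableAt (by norm_num)
  rw [fderiv_fun_neg]
  have := aux_fderiv_refl h1 x y (Pi.single i 1)
  simp [this]

lemma aux_lapl_zero {n : ℕ} {g : (Fin n → ℝ) → ℝ} {x : Fin n → ℝ} (hx : x ∉ tsupport g) :
    lapl g x = 0 := by
  unfold lapl hess2
  refine Finset.sum_eq_zero fun i _ => ?_
  have h1 : x ∉ tsupport (fun z => fderiv ℝ g z (Pi.single i 1)) := fun h =>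
    hx (tsupport_fderiv_apply_subset ℝ _ h)
  have h2 : x ∉ tsupport (fun y => fderiv ℝ (fun z => fderiv ℝ g z (Pi.single i 1)) y
      (Pi.single i 1)) := fun h => h1 (tsupport_fderiv_apply_subset ℝ _ h)
  exact image_eq_zero_of_notMem_tsupport (f := fun y =>
    fderiv ℝ (fun z => fderiv ℝ g z (Pi.single i 1)) y (Pi.single i 1)) h2

lemma aux_D_conv {n : ℕ} {F g : (Fin n → ℝ) → ℝ} (hF : LocallyIntegrable F volume)
    (hg : ContDiff ℝ 1 g) (hc : HasCompactSupport g) (v : Fin n → ℝ) :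
    (fun x => fderiv ℝ (convolution F g (ContinuousLinearMap.lsmul ℝ ℝ) volume) x v) =
      convolution F (fun z => fderiv ℝ g z v) (ContinuousLinearMap.lsmul ℝ ℝ) volume := by
  funext x
  rw [(hc.hasFDerivAt_convolution_right (ContinuousLinearMap.lsmul ℝ ℝ) hF hg x).fderiv]
  exact convolution_precompR_apply _ hF (hc.fderiv ℝ) (hg.continuous_fderiv (by norm_num)) x v

lemma aux_lapl_conv {n : ℕ} {F g : (Fin n → ℝ) → ℝ} (hF : LocallyIntegrable F volume)
    (hg : ContDiff ℝ 2 g) (hc : HasCompactSupport g) (x : Fin n → ℝ) :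
    lapl (convolution F g (ContinuousLinearMap.lsmul ℝ ℝ) volume) x =
      ∫ t, F t * lapl g (x - t) := by
  have hD : ∀ v, ContDiff ℝ 1 (fun z => fderiv ℝ g z v) := fun v =>
    contDiff_iff_contDiffAt.2 fun z => aux_D_contDiffAt hg.contDiffAt v
  unfold lapl hess2
  simp_rw [Finset.mul_sum]
  rw [integral_finsetSum]
  · refine Finset.sum_congr rfl fun i _ => ?_
    rw [aux_D_conv hF (hg.of_le (by norm_num)) hc]
    have := congrFun (aux_D_conv hF (hD (Pi.single i 1)) (hc.fderiv_apply ℝ (Pi.single i 1))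
      (Pi.single i 1)) x
    rw [this]
    simp [convolution_def]
  · intro i _
    have hcc : Continuous (fun y => fderiv ℝ (fun z => fderiv ℝ g z (Pi.single i 1)) y
      (Pi.single i 1)) :=
      ((hD (Pi.single i 1)).continuous_fderiv (by norm_num)).clm_apply continuous_const
    have hs := (hc.fderiv_apply ℝ (Pi.single i 1)).fderiv_apply ℝ (Pi.single i 1)
    have := hs.convolutionExists_right (ContinuousLinearMap.lsmul ℝ ℝ) hF hcc x
    simpa [ConvolutionExistsAt] using this

lemma aux_key {n : ℕ} (Ω : Set (Fin n → ℝ)) (hΩ : IsOpen Ω)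
    (f : (Fin n → ℝ) → ℝ) (hf : ContinuousOn f Ω)
    (α : (Fin n → ℝ) → ℝ) (hα : ContinuousOn α Ω)
    (hdist : ∀ φ : (Fin n → ℝ) → ℝ, ContDiff ℝ (⊤ : ℕ∞) φ → HasCompactSupport φ →
      tsupport φ ⊆ Ω → (∀ x, 0 ≤ φ x) →
      ∫ x in Ω, f x * lapl φ x ≤ ∫ x in Ω, α x * φ x)
    (K : Set (Fin n → ℝ)) (hK : IsCompact K) (hKΩ : K ⊆ Ω) (C : ℝ) (hC : ∀ t ∈ K, α t ≤ C)
    (ρ : ContDiffBump (0 : Fin n → ℝ)) (x : Fin n → ℝ) (hx : Metric.closedBall x ρ.rOut ⊆ K) :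
    lapl (convolution (K.indicator f) (ρ.normed volume)
      (ContinuousLinearMap.lsmul ℝ ℝ) volume) x ≤ C := by
  have hKm : MeasurableSet K := hK.isClosed.measurableSet
  have hF : Integrable (K.indicator f) volume :=
    (integrable_indicator_iff hKm).2 ((hf.mono hKΩ).integrableOn_compact hK)
  have hρ : ContDiff ℝ 2 (ρ.normed volume) := ρ.contDiff_normed (n := 2)
  set φ : (Fin n → ℝ) → ℝ := fun y => ρ.normed volume (x - y) with hφ
  have hφs : ContDiff ℝ (⊤ : ℕ∞) φ :=
    (ρ.contDiff_normed (n := ⊤)).comp (contDiff_const.sub contDiff_id)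
  have hφ0 : ∀ y, 0 ≤ φ y := fun y => ρ.nonneg_normed _
  have hts : tsupport φ ⊆ K := by
    refine (closure_minimal ?_ Metric.isClosed_closedBall).trans hx
    intro y hy
    have : x - y ∈ Function.support (ρ.normed volume) := hy
    rw [ρ.support_normed_eq, mem_ball_zero_iff] at this
    rw [Metric.mem_closedBall, dist_comm, dist_eq_norm]
    exact this.le
  have hcs : HasCompactSupport φ := hK.of_isClosed_subset (isClosed_tsupport _) hts
  have h1 := hdist φ hφs hcs (hts.trans hKΩ) hφ0
  have hint : ∫ y, φ y = 1 := by
    rw [hφ, integral_sub_left_eq_self (fun y => ρ.normed volume y) volume x]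
    exact ρ.integral_normed
  rw [aux_lapl_conv hF.locallyIntegrable hρ ρ.hasCompactSupport_normed]
  have e1 : ∫ t, K.indicator f t * lapl (ρ.normed volume) (x - t) =
      ∫ t in Ω, f t * lapl φ t := by
    rw [setIntegral_eq_of_subset_of_forall_sdiff_eq_zero hΩ.measurableSet hKΩ,
      ← integral_indicator hKm]
    · congr 1
      funext t
      have hl : lapl φ t = lapl (ρ.normed volume) (x - t) := aux_lapl_refl hρ x t
      by_cases ht : t ∈ K <;> simp [ht, hl]
    · intro t ht
      rw [aux_lapl_zero (fun h => ht.2 (hts h)), mul_zero]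
  have e2 : ∫ t in Ω, α t * φ t = ∫ t in K, α t * φ t := by
    rw [setIntegral_eq_of_subset_of_forall_sdiff_eq_zero hΩ.measurableSet hKΩ]
    intro t ht
    rw [image_eq_zero_of_notMem_tsupport (fun h => ht.2 (hts h)), mul_zero]
  have e3 : ∫ t in K, φ t = 1 := by
    rw [setIntegral_eq_integral_of_forall_compl_eq_zero, hint]
    intro t ht
    exact image_eq_zero_of_notMem_tsupport (fun h => ht (hts h))
  have e4 : ∫ t in K, α t * φ t ≤ ∫ t in K, C * φ t := by
    apply setIntegral_mono_on _ _ hKm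
    · intro t ht
      exact mul_le_mul_of_nonneg_right (hC t ht) (hφ0 t)
    · exact ((hα.mono hKΩ).mul hφs.continuous.continuousOn).integrableOn_compact hK
    · exact (continuousOn_const.mul hφs.continuous.continuousOn).integrableOn_compact hK
  rw [integral_const_mul, e3, mul_one] at e4
  rw [e1]
  linarith

end Aux

open MeasureTheory Filter Topology in
/-- If `Δ f ≤ α` holds on `Ω` in the distributional sense, then it holds at every point
of `Ω` in the viscosity sense. -/
theorem distributional_implies_viscosity_laplacian {n : ℕ}
    (Ω : Set (Fin n → ℝ)) (hΩ : IsOpen Ω)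
    (f : (Fin n → ℝ) → ℝ) (hf : ContinuousOn f Ω)
    (α : (Fin n → ℝ) → ℝ) (hα : ContDiffOn ℝ (⊤ : ℕ∞) α Ω)
    (hdist : ∀ φ : (Fin n → ℝ) → ℝ, ContDiff ℝ (⊤ : ℕ∞) φ → HasCompactSupport φ →
      tsupport φ ⊆ Ω → (∀ x, 0 ≤ φ x) →
      ∫ x in Ω, f x * lapl φ x ≤ ∫ x in Ω, α x * φ x) :
    ∀ p ∈ Ω, ∀ (U : Set (Fin n → ℝ)) (h : (Fin n → ℝ) → ℝ),
      IsOpen U → p ∈ U → U ⊆ Ω → ContDiffOn ℝ 2 h U → h p = f p →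
      (∀ x ∈ U, h x ≤ f x) → lapl h p ≤ α p := by
  classical
  intro p hp U h hU hpU hUΩ hh hhp hle
  by_contra hcon
  push Not at hcon
  have hhat : ∀ x ∈ U, ContDiffAt ℝ 2 h x := fun x hx => hh.contDiffAt (hU.mem_nhds hx)
  set S : (Fin n → ℝ) → ℝ := fun y => ∑ j, (y j - p j) ^ 2 with hS
  have hSc : ContDiff ℝ 2 S := by
    apply ContDiff.sum
    intro j _
    exact ((contDiff_apply ℝ ℝ j).sub contDiff_const).pow 2
  have hSp : S p = 0 := by simp [hS]
  have hSd : ∀ x, dist x p ^ 2 ≤ S x := by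
    intro x
    have hS0 : 0 ≤ S x := Finset.sum_nonneg fun j _ => sq_nonneg _
    have : dist x p ≤ √(S x) := by
      rw [dist_pi_le_iff (Real.sqrt_nonneg _)]
      intro j
      apply Real.le_sqrt_of_sq_le
      rw [Real.dist_eq, sq_abs]
      exact Finset.single_le_sum (f := fun j => (x j - p j) ^ 2) (fun j _ => sq_nonneg _)
        (Finset.mem_univ j)
    calc dist x p ^ 2 ≤ √(S x) ^ 2 := by gcongr
      _ = S x := Real.sq_sqrt hS0
  -- the margins
  set η : ℝ := (lapl h p - α p) / 4 with hη
  have hη0 : 0 < η := by rw [hη]; linarith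
  set ε : ℝ := η / (2 * n + 1) with hε
  have hn0 : (0:ℝ) ≤ n := Nat.cast_nonneg n
  have hε0 : 0 < ε := by positivity
  have hεn : ε * (2 * n) ≤ η := by
    rw [hε, div_mul_eq_mul_div, div_le_iff₀ (by positivity)]
    nlinarith
  have ev1 : ∀ᶠ x in 𝓝 p, lapl h p - η < lapl h x :=
    (aux_lapl_cont (hhat p hpU)).eventually (lt_mem_nhds (by linarith))
  have ev2 : ∀ᶠ x in 𝓝 p, α x < α p + η :=
    ((hα.continuousOn.continuousAt (hΩ.mem_nhds hp))).eventually (gt_mem_nhds (by linarith))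
  obtain ⟨R, hR0, hR⟩ := Metric.eventually_nhds_iff_ball.1
    ((ev1.and ev2).and (hU.mem_nhds hpU))
  set r : ℝ := R / 4 with hr
  have hr0 : 0 < r := by positivity
  have hball : ∀ x ∈ Metric.closedBall p (2 * r),
      (lapl h p - η < lapl h x ∧ α x < α p + η) ∧ x ∈ U := fun x hx =>
    hR x (by rw [Metric.mem_closedBall] at hx; rw [Metric.mem_ball]; linarith)
  set K := Metric.closedBall p (2 * r) with hKdef
  have hK : IsCompact K := isCompact_closedBall _ _
  have hKU : K ⊆ U := fun x hx => (hball x hx).2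
  have hKΩ : K ⊆ Ω := hKU.trans hUΩ
  have hfK : ContinuousOn f K := hf.mono hKΩ
  set e : ℝ := ε * r ^ 2 / 4 with he
  have he0 : 0 < e := by positivity
  obtain ⟨δ, hδ0, hδ⟩ := Metric.uniformContinuousOn_iff.1
    (hK.uniformContinuousOn_of_continuous hfK) e he0
  set d : ℝ := min δ r with hd
  have hd0 : 0 < d := lt_min hδ0 hr0
  let ρ : ContDiffBump (0 : Fin n → ℝ) := ⟨d / 2, d, by positivity, by linarith⟩
  have hρR : ρ.rOut = d := rfl
  have hKm : MeasurableSet K := hK.isClosed.measurableSet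
  have hF : Integrable (K.indicator f) volume :=
    (integrable_indicator_iff hKm).2 (hfK.integrableOn_compact hK)
  set g := convolution (K.indicator f) (ρ.normed volume)
    (ContinuousLinearMap.lsmul ℝ ℝ) volume with hg
  have hgc : ContDiff ℝ 2 g := ρ.hasCompactSupport_normed.contDiff_convolution_right (n := 2) _
    hF.locallyIntegrable (ρ.contDiff_normed (n := 2))
  have hin : ∀ x ∈ Metric.closedBall p r, Metric.closedBall x ρ.rOut ⊆ K := by
    intro x hx
    apply Metric.closedBall_subset_closedBall'
    rw [hρR]
    have := Metric.mem_closedBall.1 hx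
    have : d ≤ r := min_le_right _ _
    linarith
  have hglap : ∀ x ∈ Metric.closedBall p r, lapl g x ≤ α p + η := fun x hx =>
    aux_key Ω hΩ f hf α hα.continuousOn hdist K hK hKΩ _ (fun t ht => (hball t ht).1.2.le) ρ x
      (hin x hx)
  have hgf : ∀ x ∈ Metric.closedBall p r, |g x - f x| ≤ e := by
    intro x hx
    have hxK : x ∈ K := hin x hx (Metric.mem_closedBall_self ρ.rOut_pos.le)
    have h1 := ContDiffBump.dist_normed_convolution_le (φ := ρ) (μ := volume)
      (g := K.indicator f) (x₀ := x) (ε := e) hF.aestronglyMeasurable (by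
        intro y hy
        have hyK : y ∈ K := hin x hx (Metric.ball_subset_closedBall hy)
        rw [Set.indicator_of_mem hxK, Set.indicator_of_mem hyK]
        refine (hδ y hyK x hxK ?_).le
        exact lt_of_lt_of_le (Metric.mem_ball.1 hy) (min_le_left _ _))
    rw [Set.indicator_of_mem hxK, Real.dist_eq] at h1
    have h2 : convolution (ρ.normed volume) (K.indicator f)
        (ContinuousLinearMap.lsmul ℝ ℝ) volume x = g x := by
      rw [convolution_lsmul_swap, hg, convolution_def]
      simp [mul_comm]
    rwa [h2] at h1
  -- the function with an interior minimum
  set w : (Fin n → ℝ) → ℝ := fun y => (g y + (-1) * h y) + ε * S y with hw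
  have hBU : Metric.closedBall p r ⊆ U :=
    (Metric.closedBall_subset_closedBall (by linarith)).trans hKU
  have hwc : ContinuousOn w (Metric.closedBall p r) :=
    ((hgc.continuous.continuousOn).add (continuousOn_const.mul (hh.continuousOn.mono hBU))).add
      (continuousOn_const.mul hSc.continuous.continuousOn)
  have hpB : p ∈ Metric.closedBall p r := Metric.mem_closedBall_self hr0.le
  obtain ⟨x, hxB, hxmin⟩ := (isCompact_closedBall p r).exists_isMinOn ⟨p, hpB⟩ hwc
  have hxint : x ∈ Metric.ball p r := by
    rw [Metric.mem_ball]
    by_contra hge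
    push Not at hge
    have h1 : w x ≤ w p := hxmin hpB
    have h2 := abs_le.1 (hgf x hxB)
    have h3 := abs_le.1 (hgf p hpB)
    have h4 := hle x (hBU hxB)
    have h5 : r ^ 2 ≤ S x := le_trans (by gcongr) (hSd x)
    have h6 : ε * r ^ 2 ≤ ε * S x := by gcongr
    simp only [hw, hSp] at h1
    linarith
  have hloc : IsLocalMin w x :=
    hxmin.isLocalMin (Filter.mem_of_superset (Metric.isOpen_ball.mem_nhds hxint)
      Metric.ball_subset_closedBall)
  have hhx := hhat x (hBU hxB)
  have hgh : ContDiffAt ℝ 2 (fun y => g y + (-1) * h y) x :=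
    hgc.contDiffAt.add (contDiffAt_const.mul hhx)
  have hpos := aux_lapl_nonneg (hgh.add (contDiffAt_const.mul hSc.contDiffAt)) hloc
  rw [aux_lapl_add ε hgh hSc.contDiffAt, aux_lapl_add (-1) hgc.contDiffAt hhx,
    hS, aux_lapl_sq] at hpos
  have h7 := hglap x hxB
  have h8 := (hball x (Metric.closedBall_subset_closedBall (by linarith) hxB)).1.1
  linarith
end

section
/- Let Ω ⊆ ℝⁿ be open, let f : Ω → ℝ be continuous, and let A be a smooth field of symmetric n×n real matrices on Ω. If f satisfies Hess f ≤ A at every point of Ω in the viscosity sense, then f satisfies Hess f ≤ A on Ω in the distributional sense. -/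
open Finset

open MeasureTheory Metric Set Filter Topology

lemma clm_sum {n : ℕ} (L : (Fin n → ℝ) →L[ℝ] ℝ) (v : Fin n → ℝ) :
    L v = ∑ i, v i * L (Pi.single i 1) := by
  conv_lhs => rw [pi_eq_sum_univ' v]
  rw [map_sum]
  refine Finset.sum_congr rfl fun i _ => ?_
  rw [map_smul, smul_eq_mul]
  

lemma hess2_line {n : ℕ} (h : (Fin n → ℝ) → ℝ) (hh : ContDiff ℝ 2 h) (p v : Fin n → ℝ) :
    ∑ i, ∑ j, hess2 h p i j * v i * v j = deriv (deriv (fun t : ℝ => h (p + t • v))) 0 := by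
  have hd : Differentiable ℝ h := hh.differentiable (by norm_num)
  have hd2 : Differentiable ℝ (fderiv ℝ h) :=
    (hh.fderiv_right (m := 1) (by norm_num)).differentiable (by norm_num)
  have hl : ∀ t : ℝ, HasDerivAt (fun t : ℝ => p + t • v) v t := by
    intro t
    simpa using ((hasDerivAt_id t).smul_const v).const_add p
  have h1 : deriv (fun t : ℝ => h (p + t • v)) = fun t => fderiv ℝ h (p + t • v) v := by
    funext t
    exact ((hd _).hasFDerivAt.comp_hasDerivAt t (hl t)).deriv
  have hd3 : ∀ u : Fin n → ℝ, Differentiable ℝ (fun x => fderiv ℝ h x u) := fun u =>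
    hd2.clm_apply (differentiable_const u)
  have h2 : deriv (fun t : ℝ => fderiv ℝ h (p + t • v) v) 0
      = fderiv ℝ (fun x => fderiv ℝ h x v) p v := by
    have := ((hd3 v (p + (0:ℝ) • v)).hasFDerivAt.comp_hasDerivAt (0:ℝ) (hl 0)).deriv
    simpa [Function.comp_def] using this
  rw [h1, h2]
  have h3 : (fun x => fderiv ℝ h x v) = fun x => ∑ i, v i * fderiv ℝ h x (Pi.single i 1) := by
    funext x; exact clm_sum _ _
  rw [h3, fderiv_fun_sum (fun i _ => (hd3 _ p).const_mul _), _root_.sum_apply]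
  refine Finset.sum_congr rfl fun i _ => ?_
  rw [fderiv_const_mul (hd3 _ p), _root_.smul_apply,
    clm_sum _ v, smul_eq_mul, Finset.mul_sum]
  refine Finset.sum_congr rfl fun j _ => ?_
  unfold hess2; ring

lemma hess2_le_of_diff {n : ℕ} (g : (Fin n → ℝ) → ℝ) (hg : ContDiff ℝ 2 g) (x v : Fin n → ℝ)
    (m : ℝ) (hm : ∀ᶠ t : ℝ in 𝓝 0, g (x + t • v) + g (x - t • v) - 2 * g x ≤ t ^ 2 * m) :
    ∑ i, ∑ j, hess2 g x i j * v i * v j ≤ m := by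
  rw [hess2_line g hg]
  set u : ℝ → ℝ := fun t => g (x + t • v) with hu
  have huC : ContDiff ℝ 2 u := by
    apply hg.comp; fun_prop
  have hud : Differentiable ℝ u := huC.differentiable (by norm_num)
  have hud2 : Differentiable ℝ (deriv u) :=
    ((contDiff_succ_iff_deriv (n := 1)).1 huC).2.2.differentiable (by norm_num)
  by_contra hlt
  push Not at hlt
  obtain ⟨m', h1, h2⟩ := exists_between hlt
  set ψ : ℝ → ℝ := fun t => u t + u (-t) - m' * t ^ 2 with hψ
  have hneg : ∀ t : ℝ, HasDerivAt (fun t : ℝ => -t) (-1) t := fun t => hasDerivAt_neg t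
  have d1 : ∀ t, HasDerivAt ψ (deriv u t + -deriv u (-t) - m' * (2 * t)) t := by
    intro t
    have a1 := (hud t).hasDerivAt
    have a2 := (hud (-t)).hasDerivAt.comp t (hneg t)
    have a3 := ((hasDerivAt_pow 2 t).const_mul m')
    refine ((a1.add a2).sub a3).congr_deriv ?_
    simp
  have d1' : deriv ψ = fun t => deriv u t + -deriv u (-t) - m' * (2 * t) :=
    funext fun t => (d1 t).deriv
  have d2 : deriv (deriv ψ) 0 = 2 * (deriv (deriv u) 0 - m') := by
    rw [d1']
    have a1 := (hud2 0).hasDerivAt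
    have b0 : HasDerivAt (deriv u) (deriv (deriv u) 0) (-0 : ℝ) := by simpa using a1
    have a2 := (b0.comp (0:ℝ) (hneg 0)).neg
    have a3 := (((hasDerivAt_id (0:ℝ)).const_mul 2).const_mul m')
    have := ((a1.add a2).sub a3).deriv
    refine Eq.trans ?_ (this.trans ?_)
    · rfl
    · ring
  have hloc : IsLocalMin ψ 0 := by
    apply isLocalMin_of_deriv_deriv_pos
    · rw [d2]; linarith
    · rw [d1']; simp
    · exact (d1 0).continuousAt
  have hev := hloc.and hm
  have hev' : ∀ᶠ t : ℝ in 𝓝[≠] 0, ψ 0 ≤ ψ t ∧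
      g (x + t • v) + g (x - t • v) - 2 * g x ≤ t ^ 2 * m := hev.filter_mono nhdsWithin_le_nhds
  obtain ⟨t, ⟨ht1, ht2⟩, ht0⟩ := (hev'.and self_mem_nhdsWithin).exists
  simp only [hψ, hu, neg_smul, neg_zero, zero_smul, add_zero] at ht1
  rw [← sub_eq_add_neg] at ht1
  have : 0 < t ^ 2 := by have : t ≠ 0 := ht0
                         positivity
  nlinarith

lemma ibp {n : ℕ} (g W : (Fin n → ℝ) → ℝ) (hg : ContDiff ℝ 2 g) (hW : ContDiff ℝ 2 W)
    (hWc : HasCompactSupport W) (i j : Fin n) :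
    ∫ x, g x * hess2 W x i j = ∫ x, hess2 g x j i * W x := by
  have key : ∀ (a b : (Fin n → ℝ) → ℝ) (v : Fin n → ℝ), ContDiff ℝ 1 a → ContDiff ℝ 1 b →
      HasCompactSupport b → ∫ x, a x * fderiv ℝ b x v = - ∫ x, fderiv ℝ a x v * b x := by
    intro a b v ha hb hbc
    have hda : Continuous fun x => fderiv ℝ a x v :=
      (ha.continuous_fderiv (by norm_num)).clm_apply continuous_const
    have hdb : Continuous fun x => fderiv ℝ b x v :=
      (hb.continuous_fderiv (by norm_num)).clm_apply continuous_const
    have hdbc : HasCompactSupport fun x => fderiv ℝ b x v := hbc.fderiv_apply ℝ v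
    apply integral_mul_fderiv_eq_neg_fderiv_mul_of_integrable
    · exact (hda.mul hb.continuous).integrable_of_hasCompactSupport hbc.mul_left
    · exact (ha.continuous.mul hdb).integrable_of_hasCompactSupport hdbc.mul_left
    · exact (ha.continuous.mul hb.continuous).integrable_of_hasCompactSupport hbc.mul_left
    · exact fun x _ => ha.differentiable (by norm_num) x
    · exact fun x _ => hb.differentiable (by norm_num) x
  have hpd : ∀ (a : (Fin n → ℝ) → ℝ) (v : Fin n → ℝ), ContDiff ℝ 2 a →
      ContDiff ℝ 1 (fun x => fderiv ℝ a x v) := fun a v ha =>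
    (ha.fderiv_right (m := 1) (by norm_num)).clm_apply contDiff_const
  unfold hess2
  rw [key g (fun x => fderiv ℝ W x (Pi.single i 1)) _ (hg.of_le (by norm_num)) (hpd _ _ hW)
    (hWc.fderiv_apply ℝ _)]
  rw [key (fun x => fderiv ℝ g x (Pi.single j 1)) W _ (hpd _ _ hg) (hW.of_le (by norm_num)) hWc,
    neg_neg]

lemma second_diff_strict {n : ℕ}
    (Ω : Set (Fin n → ℝ))
    (f : (Fin n → ℝ) → ℝ) (hf : ContinuousOn f Ω)
    (A : (Fin n → ℝ) → Matrix (Fin n) (Fin n) ℝ)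
    (hvisc : ∀ p ∈ Ω, ∀ (U : Set (Fin n → ℝ)) (h : (Fin n → ℝ) → ℝ),
      IsOpen U → p ∈ U → U ⊆ Ω → ContDiffOn ℝ 2 h U → h p = f p →
      (∀ x ∈ U, h x ≤ f x) →
      ∀ v : Fin n → ℝ,
        0 ≤ ∑ i, ∑ j, (A p i j - hess2 h p i j) * v i * v j)
    (x0 w : Fin n → ℝ) (R μ : ℝ) (hwR : ‖w‖ < R) (hR : closedBall x0 R ⊆ Ω)
    (hμ : ∀ p ∈ closedBall x0 R, ∑ i, ∑ j, A p i j * w i * w j < μ) :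
    f (x0 + w) + f (x0 - w) - 2 * f x0 ≤ μ := by
  have hRpos : 0 < R := (norm_nonneg w).trans_lt hwR
  by_cases hw : w = 0
  · have := hμ x0 (mem_closedBall_self hRpos.le)
    simp [hw] at this ⊢
    linarith
  obtain ⟨i0, hi0⟩ : ∃ i, w i ≠ 0 := by
    by_contra hcon; push Not at hcon; exact hw (funext hcon)
  by_contra hcon
  push Not at hcon
  -- the linear functional and projection
  set lam : (Fin n → ℝ) → ℝ := fun x => (x i0 - x0 i0) / w i0 with hlam
  set P : (Fin n → ℝ) → (Fin n → ℝ) := fun x j => x j - x0 j - lam x * w j with hP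
  set N : (Fin n → ℝ) → ℝ := fun x => ∑ j, (P x j) ^ 2 with hN
  have lamC : ContDiff ℝ 2 lam := by
    apply ContDiff.div_const
    apply ContDiff.sub _ contDiff_const
    exact contDiff_apply ℝ ℝ i0
  have PC : ∀ j, ContDiff ℝ 2 (fun x => P x j) := by
    intro j
    exact ((contDiff_apply ℝ ℝ j).sub contDiff_const).sub (lamC.mul contDiff_const)
  have PCont : Continuous P := continuous_pi fun j => (PC j).continuous
  have NC : ContDiff ℝ 2 N := ContDiff.sum fun j _ => (PC j).pow 2
  have hdec : ∀ x, x = x0 + lam x • w + P x := by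
    intro x; funext j; simp [hP]
  set η : ℝ := ((f (x0 + w) + f (x0 - w)) / 2 - μ / 2 - f x0) / 2 with hη
  have hηpos : 0 < η := by rw [hη]; linarith
  set b : ℝ := (f (x0 + w) - f (x0 - w)) / 2 with hb
  set a : ℝ := (f (x0 + w) + f (x0 - w)) / 2 - η - μ / 2 with ha
  set q : (Fin n → ℝ) → ℝ := fun x => a + b * lam x + μ / 2 * lam x ^ 2 with hq
  have qC : ContDiff ℝ 2 q :=
    (contDiff_const.add (contDiff_const.mul lamC)).add (contDiff_const.mul (lamC.pow 2))
  have hlamp : lam (x0 + w) = 1 := by simp [hlam, hi0]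
  have hlamm : lam (x0 - w) = -1 := by simp [hlam, hi0]
  have hlam0 : lam x0 = 0 := by simp [hlam]
  have hP0 : P x0 = 0 := by funext j; simp [hP, hlam0]
  have memp : x0 + w ∈ ball x0 R := by simpa [mem_ball_iff_norm] using hwR
  have memm : x0 - w ∈ ball x0 R := by simpa [mem_ball_iff_norm] using hwR
  have hfc : ∀ z ∈ ball x0 R, ContinuousAt f z := fun z hz =>
    hf.continuousAt (mem_of_superset (isOpen_ball.mem_nhds hz) (ball_subset_closedBall.trans hR))
  have evp : ∀ᶠ x in 𝓝 (x0 + w), 0 < f x - q x := by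
    apply ((hfc _ memp).sub qC.continuous.continuousAt).eventually (lt_mem_nhds _)
    change 0 < f (x0 + w) - q (x0 + w)
    simp only [hq, hlamp, ha, hb]; linarith
  have evm : ∀ᶠ x in 𝓝 (x0 - w), 0 < f x - q x := by
    apply ((hfc _ memm).sub qC.continuous.continuousAt).eventually (lt_mem_nhds _)
    change 0 < f (x0 - w) - q (x0 - w)
    simp only [hq, hlamm, ha, hb]; linarith
  obtain ⟨r1, hr1, hb1⟩ := Metric.eventually_nhds_iff.1 evp
  obtain ⟨r2, hr2, hb2⟩ := Metric.eventually_nhds_iff.1 evm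
  obtain ⟨ρ, hρ0, hρ⟩ : ∃ ρ : ℝ, 0 < ρ ∧ ρ < min (min r1 r2) (R - ‖w‖) :=
    exists_between (by simp [hr1, hr2, hwR])
  simp only [lt_min_iff] at hρ
  obtain ⟨⟨hρ1, hρ2⟩, hρ3⟩ := hρ
  set K : Set (Fin n → ℝ) := {x | |lam x| ≤ 1 ∧ ‖P x‖ ≤ ρ} with hK
  have hKcl : IsClosed K :=
    (isClosed_le lamC.continuous.abs continuous_const).inter
      (isClosed_le PCont.norm continuous_const)
  have hKball : K ⊆ ball x0 R := by
    rintro x ⟨h1, h2⟩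
    rw [mem_ball_iff_norm]
    have : x - x0 = lam x • w + P x := by
      conv_lhs => rw [hdec x]
      abel
    rw [this]
    calc ‖lam x • w + P x‖ ≤ ‖lam x • w‖ + ‖P x‖ := norm_add_le _ _
      _ ≤ 1 * ‖w‖ + ρ := by
        rw [norm_smul, Real.norm_eq_abs]
        gcongr
      _ < R := by linarith
  have hKc : IsCompact K :=
    (isCompact_closedBall x0 R).of_isClosed_subset hKcl (hKball.trans ball_subset_closedBall)
  have hx0K : x0 ∈ K := by simp [hK, hlam0, hP0, hρ0.le]
  have hfK : ContinuousOn f K := fun z hz => (hfc z (hKball hz)).continuousWithinAt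
  have hfq : ContinuousOn (fun x => f x - q x) K := hfK.sub qC.continuous.continuousOn
  obtain ⟨z, hzK, hz⟩ := hKc.exists_isMinOn ⟨x0, hx0K⟩ hfq
  set m : ℝ := f z - q z with hm
  have hmle : ∀ x ∈ K, m ≤ f x - q x := fun x hx => hz hx
  set k : ℝ := (|m| + 1) / ρ ^ 2 with hk
  have hkpos : 0 < k := by positivity
  set φ : (Fin n → ℝ) → ℝ := fun x => f x - q x + k * N x with hφ
  obtain ⟨p, hpK, hp⟩ := hKc.exists_isMinOn (f := φ) ⟨x0, hx0K⟩
    (hfq.add (continuous_const.mul NC.continuous).continuousOn)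
  have hple : ∀ x ∈ K, φ p ≤ φ x := fun x hx => hp hx
  have hφp : φ p < 0 := by
    refine (hple x0 hx0K).trans_lt ?_
    simp only [hφ, hN, hP0, hq, hlam0]
    simp
    rw [ha]; linarith
  have hNnn : ∀ x, 0 ≤ N x := fun x => Finset.sum_nonneg fun j _ => sq_nonneg _
  have hfqp : f p - q p < 0 := by
    have := mul_nonneg hkpos.le (hNnn p)
    simp only [hφ] at hφp; linarith
  have hplam : |lam p| < 1 := by
    refine lt_of_le_of_ne hpK.1 fun heq => ?_
    have hdp := hdec p
    rcases (abs_eq zero_le_one).1 heq with h1 | h1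
    · have : 0 < f p - q p := by
        apply hb1
        rw [dist_eq_norm]
        have : p - (x0 + w) = P p := by
          conv_lhs => rw [hdp, h1]
          simp
        rw [this]; exact hpK.2.trans_lt hρ1
      linarith
    · have : 0 < f p - q p := by
        apply hb2
        rw [dist_eq_norm]
        have : p - (x0 - w) = P p := by
          conv_lhs => rw [hdp, h1]
          rw [neg_one_smul]; abel
        rw [this]; exact hpK.2.trans_lt hρ2
      linarith
  have hpP : ‖P p‖ < ρ := by
    refine lt_of_le_of_ne hpK.2 fun heq => ?_
    have hNge : ρ ^ 2 ≤ N p := by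
      have h1 : ‖P p‖ ≤ Real.sqrt (N p) := by
        rw [pi_norm_le_iff_of_nonneg (Real.sqrt_nonneg _)]
        intro j
        rw [Real.norm_eq_abs]
        apply Real.abs_le_sqrt
        exact Finset.single_le_sum (f := fun j => (P p j) ^ 2) (fun j _ => sq_nonneg _)
          (Finset.mem_univ j)
      rw [heq] at h1
      exact (Real.le_sqrt hρ0.le (hNnn p)).1 h1
    have h2 : |m| + 1 ≤ k * N p := by
      calc |m| + 1 = k * ρ ^ 2 := by rw [hk]; field_simp
        _ ≤ k * N p := by gcongr
    have h3 := hmle p hpK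
    have h4 := neg_abs_le m
    simp only [hφ] at hφp
    linarith
  set U : Set (Fin n → ℝ) := {x | |lam x| < 1 ∧ ‖P x‖ < ρ} with hU
  have hUo : IsOpen U :=
    (isOpen_lt lamC.continuous.abs continuous_const).inter
      (isOpen_lt PCont.norm continuous_const)
  have hUK : U ⊆ K := fun x hx => ⟨hx.1.le, hx.2.le⟩
  set h : (Fin n → ℝ) → ℝ := fun x => φ p + q x - k * N x with hh
  have hC : ContDiff ℝ 2 h := (contDiff_const.add qC).sub (contDiff_const.mul NC)
  have hpR : p ∈ closedBall x0 R := ball_subset_closedBall (hKball hpK)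
  have main := hvisc p (hR hpR) U h hUo ⟨hplam, hpP⟩
    (hUK.trans (hKball.trans (ball_subset_closedBall.trans hR))) hC.contDiffOn
    (by simp only [hh, hφ]; ring)
    (by
      intro x hx
      have := hple x (hUK hx)
      simp only [hh]
      simp only [hφ] at this ⊢
      linarith) w
  have hline : ∑ i, ∑ j, hess2 h p i j * w i * w j = μ := by
    rw [hess2_line h hC]
    have hlt : ∀ t : ℝ, lam (p + t • w) = lam p + t := by
      intro t; simp only [hlam, Pi.add_apply, Pi.smul_apply, smul_eq_mul]; field_simp; ring
    have hNt : ∀ t : ℝ, N (p + t • w) = N p := by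
      intro t
      simp only [hN]
      refine Finset.sum_congr rfl fun j _ => ?_
      congr 1
      simp only [hP, hlt, Pi.add_apply, Pi.smul_apply, smul_eq_mul]; ring
    have e1 : (fun t : ℝ => h (p + t • w)) =
        fun t => h p + (b + μ * lam p) * t + μ / 2 * t ^ 2 := by
      funext t
      simp only [hh, hq, hlt, hNt]; ring
    have e2 : deriv (fun t : ℝ => h p + (b + μ * lam p) * t + μ / 2 * t ^ 2) =
        fun t => (b + μ * lam p) + μ * t := by
      funext t
      have := (((hasDerivAt_id t).const_mul (b + μ * lam p)).const_add (h p)).add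
        ((hasDerivAt_pow 2 t).const_mul (μ / 2))
      refine Eq.trans ?_ (this.deriv.trans ?_)
      · rfl
      · simp; ring
    rw [e1, e2]
    have := (((hasDerivAt_id (0:ℝ)).const_mul μ).const_add (b + μ * lam p)).deriv
    simpa using this
  have hA := hμ p hpR
  have : ∑ i, ∑ j, (A p i j - hess2 h p i j) * w i * w j =
      ∑ i, ∑ j, A p i j * w i * w j - ∑ i, ∑ j, hess2 h p i j * w i * w j := by
    simp only [← Finset.sum_sub_distrib]
    refine Finset.sum_congr rfl fun i _ => Finset.sum_congr rfl fun j _ => ?_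
    ring
  rw [this, hline] at main
  linarith

open scoped Convolution in
lemma moll_hess_le {n : ℕ} (G : (Fin n → ℝ) → ℝ) (hG : Continuous G)
    (φ : ContDiffBump (0 : Fin n → ℝ)) (x v : Fin n → ℝ) (m : ℝ)
    (hm : ∀ᶠ t : ℝ in 𝓝 0, ∀ y ∈ ball x φ.rOut,
      G (y + t • v) + G (y - t • v) - 2 * G y ≤ t ^ 2 * m) :
    ∑ i, ∑ j, hess2 (φ.normed volume ⋆[ContinuousLinearMap.lsmul ℝ ℝ, volume] G) x i j
      * v i * v j ≤ m := by
  have hC : ContDiff ℝ 2 (φ.normed volume ⋆[ContinuousLinearMap.lsmul ℝ ℝ, volume] G) := by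
    apply HasCompactSupport.contDiff_convolution_left
    · exact φ.hasCompactSupport_normed
    · exact φ.contDiff_normed (n := 2)
    · exact hG.locallyIntegrable
  apply hess2_le_of_diff _ hC
  filter_upwards [hm] with t ht
  have hint : ∀ z : Fin n → ℝ, Integrable (fun s => φ.normed volume s * G (z - s)) := by
    intro z
    apply Continuous.integrable_of_hasCompactSupport
    · exact φ.continuous_normed.mul (hG.comp (continuous_const.sub continuous_id))
    · exact φ.hasCompactSupport_normed.mul_right
  simp only [convolution_def, ContinuousLinearMap.lsmul_apply, smul_eq_mul]
  have hint2 : ∀ z z' : Fin n → ℝ, Integrable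
      (fun s => φ.normed volume s * G (z - s) + φ.normed volume s * G (z' - s)) :=
    fun z z' => (hint z).add (hint z')
  rw [← integral_add (hint _) (hint _), ← integral_const_mul, ← integral_sub
    (hint2 _ _) ((hint _).const_mul 2)]
  have : t ^ 2 * m = ∫ s, φ.normed volume s * (t ^ 2 * m) := by
    rw [integral_mul_const, φ.integral_normed, one_mul]
  rw [this]
  apply integral_mono ((hint2 _ _).sub ((hint _).const_mul 2))
    (φ.integrable_normed.mul_const _)
  intro s
  by_cases hs : s ∈ ball (0 : Fin n → ℝ) φ.rOut
  · have h1 := ht (x - s) (by simpa [mem_ball_iff_norm] using hs)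
    have h2 := mul_le_mul_of_nonneg_left h1 (φ.nonneg_normed (μ := volume) s)
    have e1 : x + t • v - s = x - s + t • v := by abel
    have e2 : x - t • v - s = x - s - t • v := by abel
    simp only [Pi.sub_apply, e1, e2]
    linarith
  · have : φ.normed volume s = 0 := by
      rw [← Function.notMem_support, φ.support_normed_eq]; exact hs
    simp [this]

open scoped Convolution in
theorem viscosity_implies_distributional_hessian {n : ℕ}
    (Ω : Set (Fin n → ℝ)) (hΩ : IsOpen Ω)
    (f : (Fin n → ℝ) → ℝ) (hf : ContinuousOn f Ω)
    (A : (Fin n → ℝ) → Matrix (Fin n) (Fin n) ℝ)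
    (hAsmooth : ∀ i j, ContDiffOn ℝ (⊤ : ℕ∞) (fun x => A x i j) Ω)
    (hAsymm : ∀ x ∈ Ω, ∀ i j, A x i j = A x j i)
    (hvisc : ∀ p ∈ Ω, ∀ (U : Set (Fin n → ℝ)) (h : (Fin n → ℝ) → ℝ),
      IsOpen U → p ∈ U → U ⊆ Ω → ContDiffOn ℝ 2 h U → h p = f p →
      (∀ x ∈ U, h x ≤ f x) →
      ∀ v : Fin n → ℝ,
        0 ≤ ∑ i, ∑ j, (A p i j - hess2 h p i j) * v i * v j) :
    ∀ V : (Fin n → ℝ) → (Fin n → ℝ), ContDiff ℝ (⊤ : ℕ∞) V → HasCompactSupport V →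
      tsupport V ⊆ Ω →
      ∫ x in Ω, f x * ∑ i, ∑ j, hess2 (fun y => V y i * V y j) x i j ≤
        ∫ x in Ω, ∑ i, ∑ j, A x i j * V x i * V x j := by
  intro V hV hVc hVK
  set K := tsupport V with hKdef
  have hKc : IsCompact K := hVc
  have hV2 : ContDiff ℝ 2 V := contDiff_infty.1 hV 2
  have hVi : ∀ i, ContDiff ℝ 2 (fun y => V y i) := fun i => contDiff_pi.1 hV2 i
  have hV0 : ∀ x, x ∉ K → V x = 0 := fun x hx => image_eq_zero_of_notMem_tsupport hx
  have hWC : ∀ i j, ContDiff ℝ 2 (fun y => V y i * V y j) := fun i j => (hVi i).mul (hVi j)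
  have hWs : ∀ i j, tsupport (fun y => V y i * V y j) ⊆ K := by
    intro i j
    apply closure_mono
    intro x hx hx0
    apply hx
    simp [hx0]
  have hWc : ∀ i j, HasCompactSupport (fun y => V y i * V y j) := fun i j =>
    hKc.of_isClosed_subset (isClosed_tsupport _) (hWs i j)
  set D : (Fin n → ℝ) → ℝ := fun x => ∑ i, ∑ j, hess2 (fun y => V y i * V y j) x i j with hD
  have hhC : ∀ i j, Continuous (fun x => hess2 (fun y => V y i * V y j) x i j) := by
    intro i j
    have h1 : ContDiff ℝ 1 (fun x => fderiv ℝ (fun y => V y i * V y j) x (Pi.single i 1)) :=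
      ((hWC i j).fderiv_right (m := 1) (by norm_num)).clm_apply contDiff_const
    exact (h1.continuous_fderiv (by norm_num)).clm_apply continuous_const
  have hhs : ∀ i j x, x ∉ K → hess2 (fun y => V y i * V y j) x i j = 0 := by
    intro i j x hx
    apply image_eq_zero_of_notMem_tsupport (f := fun x => hess2 (fun y => V y i * V y j) x i j)
    intro hx2
    apply hx
    apply hWs i j
    exact tsupport_fderiv_apply_subset ℝ _ (tsupport_fderiv_apply_subset ℝ _ hx2)
  have hDC : Continuous D :=
    continuous_finsetSum _ fun i _ => continuous_finsetSum _ fun j _ => hhC i j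
  have hD0 : ∀ x, x ∉ K → D x = 0 := fun x hx =>
    Finset.sum_eq_zero fun i _ => Finset.sum_eq_zero fun j _ => hhs i j x hx
  have hcs : ∀ g : (Fin n → ℝ) → ℝ, (∀ x, x ∉ K → g x = 0) → HasCompactSupport g := fun g hg =>
    HasCompactSupport.intro hKc hg
  obtain ⟨δ1, hδ1, hδ1Ω⟩ := hKc.exists_cthickening_subset_open hΩ hVK
  obtain ⟨G, hGr⟩ := ContinuousMap.exists_restrict_eq
    (isClosed_cthickening (δ := δ1) (E := K))
    ⟨(cthickening δ1 K).domRestrict f, (hf.mono hδ1Ω).domRestrict⟩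
  have hGf : ∀ x ∈ cthickening δ1 K, G x = f x := fun x hx =>
    congrArg (fun g => g ⟨x, hx⟩) hGr
  have hKsub : K ⊆ cthickening δ1 K := self_subset_cthickening K
  have hL : ∫ x in Ω, f x * D x = ∫ x, G x * D x := by
    rw [setIntegral_eq_integral_of_forall_compl_eq_zero
      (fun x hx => by rw [hD0 x (fun h => hx (hVK h)), mul_zero])]
    congr 1; funext x
    by_cases hx : x ∈ K
    · rw [hGf x (hKsub hx)]
    · rw [hD0 x hx]; simp
  set Q : (Fin n → ℝ) → ℝ := fun x => ∑ i, ∑ j, A x i j * V x i * V x j with hQ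
  have hQ0 : ∀ x, x ∉ K → Q x = 0 := fun x hx => by simp [hQ, hV0 x hx]
  have hRr : ∫ x in Ω, Q x = ∫ x, Q x :=
    setIntegral_eq_integral_of_forall_compl_eq_zero (fun x hx => hQ0 x (fun h => hx (hVK h)))
  have hQint : Integrable Q := by
    have h1 : ContinuousOn Q K := by
      apply continuousOn_finsetSum _ fun i _ => continuousOn_finsetSum _ fun j _ => ?_
      exact (((hAsmooth i j).continuousOn.mono hVK).mul (hVi i).continuous.continuousOn).mul
        (hVi j).continuous.continuousOn
    have h2 := h1.integrableOn_compact (μ := volume) hKc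
    rwa [integrableOn_iff_integrable_of_support_subset] at h2
    intro x hx
    by_contra hxK
    exact hx (hQ0 x hxK)
  set S : (Fin n → ℝ) → ℝ := fun v => ∑ i, ∑ j, |v i| * |v j| with hS
  have hSC : Continuous (fun x => S (V x)) :=
    continuous_finsetSum _ fun i _ => continuous_finsetSum _ fun j _ =>
      (hVi i).continuous.abs.mul (hVi j).continuous.abs
  have hSint : Integrable (fun x => S (V x)) :=
    hSC.integrable_of_hasCompactSupport (hcs _ fun x hx => by simp [hS, hV0 x hx])
  have hDabs : Integrable (fun x => |D x|) :=
    hDC.abs.integrable_of_hasCompactSupport (hcs _ fun x hx => by simp [hD0 x hx])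
  rw [hL, hRr]
  have claim : ∀ ε > 0, ∫ x, G x * D x ≤ (∫ x, Q x) + ε * ((∫ x, S (V x)) + ∫ x, |D x|) := by
    intro ε hε
    have hAc : ∀ x ∈ K, ContinuousAt (fun x i j => A x i j : (Fin n → ℝ) → Fin n → Fin n → ℝ) x := by
      intro x hx
      refine continuousAt_pi.2 fun i => continuousAt_pi.2 fun j => ?_
      exact (hAsmooth i j).continuousOn.continuousAt (hΩ.mem_nhds (hVK hx))
    obtain ⟨δ2, hδ2, hA2⟩ := Metric.mem_uniformity_dist.1
      (hKc.uniformContinuousAt_of_continuousAt _ hAc (Metric.dist_mem_uniformity hε))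
    obtain ⟨δ3, hδ3, hG3⟩ := Metric.mem_uniformity_dist.1
      (hKc.uniformContinuousAt_of_continuousAt G (fun x _ => G.continuous.continuousAt)
        (Metric.dist_mem_uniformity hε))
    obtain ⟨δ, hδ0, hδ⟩ : ∃ δ : ℝ, 0 < δ ∧ δ < min (min δ1 δ2) δ3 :=
      exists_between (by simp [hδ1, hδ2, hδ3])
    simp only [lt_min_iff] at hδ
    obtain ⟨⟨hd1, hd2⟩, hd3⟩ := hδ
    let φ : ContDiffBump (0 : Fin n → ℝ) := ⟨δ / 4, δ / 2, by positivity, by linarith⟩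
    set g : (Fin n → ℝ) → ℝ :=
      φ.normed volume ⋆[ContinuousLinearMap.lsmul ℝ ℝ, volume] G with hg
    have hgC : ContDiff ℝ 2 g := by
      apply HasCompactSupport.contDiff_convolution_left
      · exact φ.hasCompactSupport_normed
      · exact φ.contDiff_normed (n := 2)
      · exact G.continuous.locallyIntegrable
    have hgG : ∀ x ∈ K, |g x - G x| ≤ ε := by
      intro x hx
      rw [← Real.dist_eq]
      apply φ.dist_normed_convolution_le G.continuous.aestronglyMeasurable
      intro y hy
      have hy' : dist y x < δ / 2 := hy
      have := hG3 (a := x) (b := y) (by rw [dist_comm]; linarith) hx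
      rw [dist_comm]
      exact (le_of_lt this)
    have hgH : ∀ x ∈ K, ∀ v : Fin n → ℝ, ∑ i, ∑ j, hess2 g x i j * v i * v j ≤
        ∑ i, ∑ j, A x i j * v i * v j + ε * S v := by
      intro x hx v
      apply moll_hess_le G G.continuous φ x v
      have hball : ∀ z, dist z x ≤ δ → z ∈ cthickening δ1 K := fun z hz =>
        mem_cthickening_of_dist_le z x δ1 K hx (hz.trans hd1.le)
      have hsmall : ∀ᶠ t : ℝ in 𝓝 0, ‖t • v‖ < δ / 4 := by
        have hc : ContinuousAt (fun t : ℝ => ‖t • v‖) 0 := by fun_prop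
        apply hc.eventually (gt_mem_nhds _)
        simpa using hδ0
      filter_upwards [hsmall] with t ht y hy
      have hy' : dist y x < δ / 2 := hy
      have hyb : ∀ z ∈ closedBall y (δ / 4), dist z x < δ := by
        intro z hz
        have h1 := dist_triangle z y x
        have h2 : dist z y ≤ δ / 4 := hz
        linarith
      have m1 : y + t • v ∈ closedBall y (δ / 4) := by
        simpa [mem_closedBall_iff_norm] using ht.le
      have m2 : y - t • v ∈ closedBall y (δ / 4) := by
        simpa [mem_closedBall_iff_norm] using ht.le
      have m3 : y ∈ closedBall y (δ / 4) := mem_closedBall_self (by positivity)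
      rw [hGf _ (hball _ (hyb _ m1).le), hGf _ (hball _ (hyb _ m2).le),
        hGf _ (hball _ (hyb _ m3).le)]
      apply le_of_forall_pos_le_add
      intro η hη
      apply second_diff_strict Ω f hf A hvisc y (t • v) (δ / 4) _ ht
        (fun z hz => hδ1Ω (hball z (hyb z hz).le))
      intro p hp
      have hpx := hA2 (a := x) (b := p) (by rw [dist_comm]; exact (hyb p hp).trans hd2) hx
      have hpx' : dist (fun i j => A x i j : Fin n → Fin n → ℝ) (fun i j => A p i j) < ε := hpx
      have hent : ∀ i j, |A p i j - A x i j| ≤ ε := by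
        intro i j
        have h1 := dist_le_pi_dist (fun i j => A x i j : Fin n → Fin n → ℝ) (fun i j => A p i j) i
        have h2 := dist_le_pi_dist (fun j => A x i j) (fun j => A p i j) j
        rw [abs_sub_comm, ← Real.dist_eq]
        linarith
      have hsum : ∑ i, ∑ j, A p i j * v i * v j ≤
          ∑ i, ∑ j, A x i j * v i * v j + ε * S v := by
        rw [hS]
        simp only [Finset.mul_sum, ← Finset.sum_add_distrib]
        refine Finset.sum_le_sum fun i _ => Finset.sum_le_sum fun j _ => ?_
        have h1 : (A p i j - A x i j) * (v i * v j) ≤ ε * (|v i| * |v j|) := by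
          refine (le_abs_self _).trans ?_
          rw [abs_mul, abs_mul]
          exact mul_le_mul_of_nonneg_right (hent i j) (by positivity)
        linarith
      have hsc : ∑ i, ∑ j, A p i j * (t • v) i * (t • v) j =
          t ^ 2 * ∑ i, ∑ j, A p i j * v i * v j := by
        simp only [Finset.mul_sum]
        refine Finset.sum_congr rfl fun i _ => Finset.sum_congr rfl fun j _ => ?_
        simp only [Pi.smul_apply, smul_eq_mul]; ring
      rw [hsc]
      have := mul_le_mul_of_nonneg_left hsum (sq_nonneg t)
      linarith
    -- integration by parts
    have hgint : ∀ i j, Integrable (fun x => g x * hess2 (fun y => V y i * V y j) x i j) :=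
      fun i j => (hgC.continuous.mul (hhC i j)).integrable_of_hasCompactSupport
        (hcs _ fun x hx => by rw [Pi.mul_apply, hhs i j x hx, mul_zero])
    have hgH2 : ∀ i j, Continuous (fun x => hess2 g x j i) := by
      intro i j
      have h1 : ContDiff ℝ 1 (fun x => fderiv ℝ g x (Pi.single j 1)) :=
        (hgC.fderiv_right (m := 1) (by norm_num)).clm_apply contDiff_const
      exact (h1.continuous_fderiv (by norm_num)).clm_apply continuous_const
    have hgint2 : ∀ i j, Integrable (fun x => hess2 g x j i * (V x i * V x j)) :=
      fun i j => ((hgH2 i j).mul (hWC i j).continuous).integrable_of_hasCompactSupport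
        (hcs _ fun x hx => by simp [hV0 x hx])
    have hI : ∫ x, g x * D x = ∫ x, ∑ i, ∑ j, hess2 g x j i * (V x i * V x j) := by
      simp only [hD, Finset.mul_sum]
      rw [integral_finsetSum _ fun i _ => integrable_finsetSum _ fun j _ => hgint i j,
        integral_finsetSum _ fun i _ => integrable_finsetSum _ fun j _ => hgint2 i j]
      refine Finset.sum_congr rfl fun i _ => ?_
      rw [integral_finsetSum _ fun j _ => hgint i j,
        integral_finsetSum _ fun j _ => hgint2 i j]
      refine Finset.sum_congr rfl fun j _ => ?_
      exact ibp g _ hgC (hWC i j) (hWc i j) i j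
    have hI2 : ∫ x, g x * D x ≤ ∫ x, (Q x + ε * S (V x)) := by
      rw [hI]
      apply integral_mono
        (integrable_finsetSum _ fun i _ => integrable_finsetSum _ fun j _ => hgint2 i j)
        (hQint.add (hSint.const_mul ε))
      intro x
      by_cases hx : x ∈ K
      · refine le_trans (le_of_eq ?_) (hgH x hx (V x))
        simp only
        rw [Finset.sum_comm]
        refine Finset.sum_congr rfl fun i _ => Finset.sum_congr rfl fun j _ => ?_
        ring
      · simp [hQ, hS, hV0 x hx]
    rw [integral_add hQint (hSint.const_mul ε), integral_const_mul] at hI2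
    have hGD : Integrable (fun x => G x * D x) :=
      (G.continuous.mul hDC).integrable_of_hasCompactSupport
        (hcs _ fun x hx => by rw [Pi.mul_apply, hD0 x hx, mul_zero])
    have hgD : Integrable (fun x => g x * D x) :=
      (hgC.continuous.mul hDC).integrable_of_hasCompactSupport
        (hcs _ fun x hx => by rw [Pi.mul_apply, hD0 x hx, mul_zero])
    have hI3 : ∫ x, G x * D x ≤ ∫ x, (g x * D x + ε * |D x|) := by
      apply integral_mono hGD (hgD.add (hDabs.const_mul ε))
      intro x
      by_cases hx : x ∈ K
      · have h1 : (G x - g x) * D x ≤ ε * |D x| := by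
          refine (le_abs_self _).trans ?_
          rw [abs_mul, abs_sub_comm]
          exact mul_le_mul_of_nonneg_right (hgG x hx) (abs_nonneg _)
        simp only [Pi.add_apply]
        linarith
      · simp [hD0 x hx]
    rw [integral_add hgD (hDabs.const_mul ε), integral_const_mul] at hI3
    linarith
  set C : ℝ := (∫ x, S (V x)) + ∫ x, |D x| with hC
  have hCpos : 0 ≤ C := add_nonneg
    (integral_nonneg fun x => Finset.sum_nonneg fun i _ => Finset.sum_nonneg fun j _ => by positivity)
    (integral_nonneg fun x => abs_nonneg _)
  apply le_of_forall_pos_le_add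
  intro η hη
  refine (claim (η / (C + 1)) (by positivity)).trans ?_
  have : η / (C + 1) * C ≤ η := by
    rw [div_mul_eq_mul_div, div_le_iff₀ (by positivity)]
    nlinarith
  linarith
end

section
/- Let Ω ⊆ ℝⁿ be open, let f : Ω → ℝ be continuous, and let A be a smooth field of symmetric n×n real matrices on Ω. If f satisfies Hess f ≤ A on Ω in the distributional sense, then f satisfies Hess f ≤ A at every point of Ω in the viscosity sense. -/
open Finset

open MeasureTheory Filter Topology

lemma second_diff_le (F F' F'' : ℝ → ℝ) (a T : ℝ) (hT : 0 ≤ T)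
    (h1 : ∀ s ∈ Set.Icc (-T) T, HasDerivAt F (F' s) s)
    (h2 : ∀ s ∈ Set.Icc (-T) T, HasDerivAt F' (F'' s) s)
    (h3 : ∀ s ∈ Set.Icc (-T) T, F'' s ≤ a) :
    F T + F (-T) - 2 * F 0 ≤ a * T ^ 2 := by
  have hm : ∀ s ∈ Set.Icc 0 T, s ∈ Set.Icc (-T) T ∧ -s ∈ Set.Icc (-T) T := by
    rintro s ⟨hs0, hs1⟩
    refine ⟨⟨by linarith, hs1⟩, ⟨by linarith, by linarith⟩⟩
  have hneg : ∀ s : ℝ, HasDerivAt (fun s : ℝ => -s) (-1) s := fun s => (hasDerivAt_id s).neg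
  have d1 : ∀ s ∈ Set.Icc 0 T, HasDerivAt (fun s => F' s - F' (-s) - 2 * a * s)
      (F'' s + F'' (-s) - 2 * a) s := by
    intro s hs
    have e1 := h2 s (hm s hs).1
    have e2 := (h2 (-s) (hm s hs).2).comp s (hneg s)
    have e3 := (hasDerivAt_id s).const_mul (2 * a)
    refine ((e1.sub e2).sub e3).congr_deriv ?_
    ring
  have d0 : ∀ s ∈ Set.Icc 0 T, HasDerivAt (fun s => F s + F (-s) - a * s ^ 2)
      (F' s - F' (-s) - 2 * a * s) s := by
    intro s hs
    have e1 := h1 s (hm s hs).1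
    have e2 := (h1 (-s) (hm s hs).2).comp s (hneg s)
    have e3 := ((hasDerivAt_id s).pow 2).const_mul a
    refine ((e1.add e2).sub e3).congr_deriv ?_
    simp
    ring
  have z0 : (0 : ℝ) ∈ Set.Icc 0 T := ⟨le_refl _, hT⟩
  have m1 : AntitoneOn (fun s => F' s - F' (-s) - 2 * a * s) (Set.Icc 0 T) := by
    apply antitoneOn_of_deriv_nonpos (convex_Icc 0 T)
    · exact fun s hs => (d1 s hs).continuousAt.continuousWithinAt
    · exact fun s hs => (d1 s (interior_subset hs)).differentiableAt.differentiableWithinAt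
    · intro s hs
      have hs := interior_subset hs
      rw [(d1 s hs).deriv]
      linarith [h3 s (hm s hs).1, h3 (-s) (hm s hs).2]
  have m0 : AntitoneOn (fun s => F s + F (-s) - a * s ^ 2) (Set.Icc 0 T) := by
    apply antitoneOn_of_deriv_nonpos (convex_Icc 0 T)
    · exact fun s hs => (d0 s hs).continuousAt.continuousWithinAt
    · exact fun s hs => (d0 s (interior_subset hs)).differentiableAt.differentiableWithinAt
    · intro s hs
      have hs := interior_subset hs
      rw [(d0 s hs).deriv]
      have := m1 z0 hs hs.1
      simpa using this
  have := m0 z0 ⟨hT, le_refl _⟩ hT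
  simp at this
  linarith

lemma hasDerivAt_int {n : ℕ} (f φ : (Fin n → ℝ) → ℝ) (hf : Integrable f)
    (hφ : ContDiff ℝ 1 φ) (hc : HasCompactSupport φ) (v : Fin n → ℝ) (t : ℝ) :
    HasDerivAt (fun t : ℝ => ∫ y, f y * φ (y - t • v))
      (∫ y, f y * (-(fderiv ℝ φ (y - t • v) v))) t := by
  have hcd : Continuous (fderiv ℝ φ) := hφ.continuous_fderiv one_ne_zero
  have hcv : Continuous (fun y => fderiv ℝ φ y v) := hcd.clm_apply continuous_const
  obtain ⟨C, hC⟩ := (hc.fderiv_apply (𝕜 := ℝ) v).exists_bound_of_continuous hcv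
  obtain ⟨C0, hC0⟩ := hc.exists_bound_of_continuous hφ.continuous
  have hsh : ∀ s : ℝ, Continuous (fun y : Fin n → ℝ => y - s • v) := fun s => by fun_prop
  refine (hasDerivAt_integral_of_dominated_loc_of_deriv_le (bound := fun y => ‖f y‖ * C)
    (F := fun s y => f y * φ (y - s • v))
    (F' := fun s y => f y * (-(fderiv ℝ φ (y - s • v) v))) (s := Set.univ) Filter.univ_mem
    ?_ ?_ ?_ ?_ ?_ ?_).2
  · exact Eventually.of_forall fun s => hf.aestronglyMeasurable.mul
      (hφ.continuous.comp (hsh s)).aestronglyMeasurable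
  · exact hf.mul_bdd (c := C0) (hφ.continuous.comp (hsh t)).aestronglyMeasurable
      (Eventually.of_forall fun y => hC0 _)
  · exact hf.aestronglyMeasurable.mul (hcv.comp (hsh t)).neg.aestronglyMeasurable
  · refine Eventually.of_forall fun y s _ => ?_
    rw [norm_mul, norm_neg]
    exact mul_le_mul_of_nonneg_left (hC _) (norm_nonneg _)
  · exact hf.norm.mul_const C
  · refine Eventually.of_forall fun y s _ => ?_
    have e1 : HasDerivAt (fun s : ℝ => y - s • v) (-v) s := by
      simpa using ((hasDerivAt_id s).smul_const v).const_sub y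
    have e2 := ((hφ.differentiable one_ne_zero) (y - s • v)).hasFDerivAt.comp_hasDerivAt s e1
    simpa using e2.const_mul (f y)

/-- second directional derivative -/
lemma hess_sum {n : ℕ} (h : (Fin n → ℝ) → ℝ) (x v : Fin n → ℝ) (hh : ContDiffAt ℝ 2 h x) :
    ∑ i, ∑ j, hess2 h x i j * v i * v j = fderiv ℝ (fun y => fderiv ℝ h y v) x v := by
  have hd : DifferentiableAt ℝ (fderiv ℝ h) x :=
    (hh.fderiv_right (m := 1) (by norm_num)).differentiableAt one_ne_zero
  have key : ∀ w u : Fin n → ℝ, fderiv ℝ (fun y => fderiv ℝ h y w) x u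
      = fderiv ℝ (fderiv ℝ h) x u w := by
    intro w u
    rw [fderiv_clm_apply hd (differentiableAt_const w)]
    simp
  rw [key]
  have hv : v = ∑ i, v i • (Pi.single i (1:ℝ) : Fin n → ℝ) := by
    ext k; simp [Finset.sum_apply, Pi.single_apply]
  conv_rhs => rw [hv]
  simp only [map_sum, map_smul, _root_.sum_apply, _root_.smul_apply,
    smul_eq_mul, hess2, key, Finset.mul_sum]
  refine Finset.sum_congr rfl fun i _ => Finset.sum_congr rfl fun j _ => ?_
  ring

lemma line_derivs {n : ℕ} (h : (Fin n → ℝ) → ℝ) (p v : Fin n → ℝ) (s : ℝ)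
    (hh : ContDiffAt ℝ 2 h (p + s • v)) :
    HasDerivAt (fun s : ℝ => h (p + s • v)) (fderiv ℝ h (p + s • v) v) s ∧
    HasDerivAt (fun s : ℝ => fderiv ℝ h (p + s • v) v)
      (fderiv ℝ (fun y => fderiv ℝ h y v) (p + s • v) v) s := by
  have e1 : HasDerivAt (fun s : ℝ => p + s • v) v s := by
    simpa using ((hasDerivAt_id s).smul_const v).const_add p
  have hd : DifferentiableAt ℝ (fderiv ℝ h) (p + s • v) :=
    (hh.fderiv_right (m := 1) (by norm_num)).differentiableAt one_ne_zero
  constructor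
  · exact (hh.differentiableAt two_ne_zero).hasFDerivAt.comp_hasDerivAt s e1
  · exact (hd.clm_apply (differentiableAt_const v)).hasFDerivAt.comp_hasDerivAt
      (f := fun s : ℝ => p + s • v) s e1

lemma core_s7 {n : ℕ} (Ω : Set (Fin n → ℝ))
    (f : (Fin n → ℝ) → ℝ) (hf : ContinuousOn f Ω) (g : (Fin n → ℝ) → ℝ) (hg : ContinuousOn g Ω)
    (v : Fin n → ℝ)
    (hd : ∀ ψ : (Fin n → ℝ) → ℝ, ContDiff ℝ (⊤ : ℕ∞) ψ → HasCompactSupport ψ → tsupport ψ ⊆ Ω →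
      ∫ x in Ω, f x * fderiv ℝ (fun y => fderiv ℝ (fun z => ψ z ^ 2) y v) x v ≤
        ∫ x in Ω, g x * ψ x ^ 2)
    (p : Fin n → ℝ) (R a T : ℝ) (hR : 0 < R) (hK : Metric.closedBall p R ⊆ Ω)
    (hga : ∀ x ∈ Metric.closedBall p R, g x ≤ a) (hT : 0 ≤ T) (hTv : T * ‖v‖ ≤ R / 2) :
    f (p + T • v) + f (p + (-T) • v) - 2 * f p ≤ a * T ^ 2 := by
  set K := Metric.closedBall p R with hKdef
  have hKc : IsCompact K := isCompact_closedBall p R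
  have hKm : MeasurableSet K := hKc.measurableSet
  have hfK := hf.mono hK
  have hgK := hg.mono hK
  have hft : Integrable (K.indicator f) := (hfK.integrableOn_compact hKc).integrable_indicator hKm
  have huc := hKc.uniformContinuousOn_of_continuous hfK
  rw [Metric.uniformContinuousOn_iff] at huc
  suffices H : ∀ ε > 0, f (p + T • v) + f (p + (-T) • v) - 2 * f p ≤ a * T ^ 2 + 4 * ε by
    refine le_of_forall_pos_le_add fun ε hε => ?_
    have := H (ε / 4) (by positivity)
    linarith
  intro ε hε
  obtain ⟨δ0, hδ0, hu⟩ := huc ε hε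
  obtain ⟨δ, hδ, hδ1, hδ2⟩ : ∃ δ, 0 < δ ∧ δ ≤ δ0 ∧ δ ≤ R / 2 :=
    ⟨min δ0 (R / 2), lt_min hδ0 (by positivity), min_le_left _ _, min_le_right _ _⟩
  let B : ContDiffBump (0 : Fin n → ℝ) := ⟨δ / 2, δ, by positivity, by linarith⟩
  have hBs : ∀ m : ℕ∞, ContDiff ℝ m (B : (Fin n → ℝ) → ℝ) := fun m => B.contDiff
  have hball : ∀ s ∈ Set.Icc (-T) T, Metric.closedBall (p + s • v) δ ⊆ K := by
    intro s hs
    apply Metric.closedBall_subset_closedBall'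
    rw [dist_eq_norm, add_sub_cancel_left, norm_smul, Real.norm_eq_abs]
    have : |s| ≤ T := abs_le.2 hs
    have : |s| * ‖v‖ ≤ T * ‖v‖ := mul_le_mul_of_nonneg_right this (norm_nonneg _)
    linarith
  let ψ : ℝ → (Fin n → ℝ) → ℝ := fun s y => B (y - (p + s • v))
  have hψs : ∀ s, ContDiff ℝ (⊤ : ℕ∞) (ψ s) := fun s =>
    (hBs _).comp (contDiff_id.sub contDiff_const)
  have hψ0 : ∀ s y, y ∉ Metric.ball (p + s • v) δ → ψ s y = 0 := by
    intro s y hy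
    apply B.zero_of_le_dist
    rw [Metric.mem_ball, not_lt] at hy
    simpa [dist_eq_norm] using hy
  have hψt : ∀ s, tsupport (ψ s) ⊆ Metric.closedBall (p + s • v) δ := by
    intro s
    apply closure_minimal _ Metric.isClosed_closedBall
    intro y hy
    by_contra hc
    exact hy (hψ0 s y fun h => hc (Metric.ball_subset_closedBall h))
  have hψc : ∀ s, HasCompactSupport (ψ s) := fun s =>
    (isCompact_closedBall (p + s • v) δ).of_isClosed_subset (isClosed_tsupport _) (hψt s)
  let φ : (Fin n → ℝ) → ℝ := fun y => ψ 0 y ^ 2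
  have hφs : ContDiff ℝ (⊤ : ℕ∞) φ := (hψs 0).pow 2
  have hφ2 : ContDiff ℝ 2 φ := by exact_mod_cast contDiff_infty.1 hφs 2
  have hφc : HasCompactSupport φ := (hψc 0).comp_left (g := fun x : ℝ => x ^ 2) (by simp)
  have hφψ : ∀ s y, φ (y - s • v) = ψ s y ^ 2 := by
    intro s y
    simp only [φ, ψ]
    have : y - s • v - (p + (0 : ℝ) • v) = y - (p + s • v) := by
      rw [zero_smul]; abel
    rw [this]
  have hφi : Integrable φ := hφs.continuous.integrable_of_hasCompactSupport hφc
  have hcpos : 0 < ∫ y, φ y := by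
    apply hφs.continuous.integral_pos_of_hasCompactSupport_nonneg_nonzero hφc
      (fun y => sq_nonneg _) (x := p)
    have : B (0 : Fin n → ℝ) = 1 := B.one_of_mem_closedBall (by simp [B.rIn_pos.le])
    simp [φ, ψ, this]
  set c := ∫ y, φ y with hcdef
  have hφsi : ∀ s : ℝ, Integrable (fun y => φ (y - s • v)) := fun s => hφi.comp_sub_right _
  have hφsc : ∀ s : ℝ, ∫ y, φ (y - s • v) = c := fun s => integral_sub_right_eq_self φ _
  -- derivatives
  let φ1 : (Fin n → ℝ) → ℝ := fun y => -(fderiv ℝ φ y v)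
  have hφ1s : ContDiff ℝ 1 φ1 :=
    ((hφ2.fderiv_right (m := 1) (by norm_num)).clm_apply contDiff_const).neg
  have hφ1c : HasCompactSupport φ1 := (hφc.fderiv_apply (𝕜 := ℝ) v).neg
  let F : ℝ → ℝ := fun s => ∫ y, K.indicator f y * φ (y - s • v)
  let F1 : ℝ → ℝ := fun s => ∫ y, K.indicator f y * φ1 (y - s • v)
  let F2 : ℝ → ℝ := fun s => ∫ y, K.indicator f y * (-(fderiv ℝ φ1 (y - s • v) v))
  have hF1 : ∀ s, HasDerivAt F (F1 s) s := fun s =>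
    hasDerivAt_int _ φ hft (hφs.of_le (by exact_mod_cast le_top)) hφc v s
  have hF2 : ∀ s, HasDerivAt F1 (F2 s) s := fun s => hasDerivAt_int _ φ1 hft hφ1s hφ1c v s
  have hF2le : ∀ s ∈ Set.Icc (-T) T, F2 s ≤ a * c := by
    intro s hs
    have hsub := (hψt s).trans (hball s hs)
    have hfun : (fun z => ψ s z ^ 2) = fun z => φ (z - s • v) := by
      ext z; rw [hφψ]
    have hD : ∀ x, -(fderiv ℝ φ1 (x - s • v) v) =
        fderiv ℝ (fun y => fderiv ℝ (fun z => ψ s z ^ 2) y v) x v := by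
      intro x
      rw [hfun]
      simp only [fderiv_comp_sub]
      rw [fderiv_comp_sub (f := fun y => fderiv ℝ φ y v)]
      simp only [φ1]
      rw [fderiv_fun_neg]
      simp
    have hD0 : ∀ x, x ∉ K →
        fderiv ℝ (fun y => fderiv ℝ (fun z => ψ s z ^ 2) y v) x v = 0 := by
      intro x hx
      have hx1 : x ∉ tsupport (ψ s) := fun h => hx (hsub h)
      have hev : (fun z => ψ s z ^ 2) =ᶠ[𝓝 x] fun _ => 0 := by
        filter_upwards [notMem_tsupport_iff_eventuallyEq.1 hx1] with z hz
        simp [hz]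
      have hev2 : (fun y => fderiv ℝ (fun z => ψ s z ^ 2) y v) =ᶠ[𝓝 x] fun _ => 0 := by
        filter_upwards [hev.fderiv (𝕜 := ℝ)] with z hz
        rw [hz]; simp
      rw [hev2.fderiv_eq]; simp
    have h1 := hd (ψ s) (hψs s) (hψc s) (hsub.trans hK)
    have hψK : ∀ x, x ∉ K → ψ s x = 0 := fun x hx =>
      image_eq_zero_of_notMem_tsupport fun h => hx (hsub h)
    rw [setIntegral_eq_integral_of_forall_compl_eq_zero
        (fun x hx => by rw [hD0 x fun h => hx (hK h), mul_zero]),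
      setIntegral_eq_integral_of_forall_compl_eq_zero
        (fun x hx => by rw [hψK x fun h => hx (hK h)]; simp),
      ← setIntegral_eq_integral_of_forall_compl_eq_zero (s := K)
        (f := fun x => g x * ψ s x ^ 2) (fun x hx => by rw [hψK x hx]; simp)] at h1
    have hψcont : Continuous (fun x => ψ s x ^ 2) := (hψs s).continuous.pow 2
    have h2 : ∫ x in K, g x * ψ s x ^ 2 ≤ ∫ x in K, a * ψ s x ^ 2 := by
      apply setIntegral_mono_on _ _ hKm
      · intro x hx
        exact mul_le_mul_of_nonneg_right (hga x hx) (sq_nonneg _)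
      · exact (hgK.mul hψcont.continuousOn).integrableOn_compact hKc
      · exact (continuousOn_const.mul hψcont.continuousOn).integrableOn_compact hKc
    have h3 : ∫ x in K, a * ψ s x ^ 2 = a * c := by
      rw [setIntegral_eq_integral_of_forall_compl_eq_zero
        (fun x hx => by rw [hψK x hx]; simp), integral_const_mul, ← hφsc s]
      simp only [hφψ]
    have h4 : F2 s = ∫ x, f x * fderiv ℝ (fun y => fderiv ℝ (fun z => ψ s z ^ 2) y v) x v := by
      apply integral_congr_ae
      refine Eventually.of_forall fun x => ?_
      simp only
      rw [hD x]
      by_cases hx : x ∈ K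
      · rw [Set.indicator_of_mem hx]
      · rw [hD0 x hx]; simp
    linarith
  have hFa : ∀ s ∈ Set.Icc (-T) T, |F s - f (p + s • v) * c| ≤ ε * c := by
    intro s hs
    have hq : p + s • v ∈ K := hball s hs (Metric.mem_closedBall_self hδ.le)
    have i1 : Integrable (fun y => K.indicator f y * φ (y - s • v)) := by
      obtain ⟨C0, hC0⟩ := hφc.exists_bound_of_continuous hφs.continuous
      exact hft.mul_bdd (c := C0) (hφsi s).aestronglyMeasurable
        (Eventually.of_forall fun y => hC0 _)
    have e : F s - f (p + s • v) * c =
        ∫ y, (K.indicator f y * φ (y - s • v) - f (p + s • v) * φ (y - s • v)) := by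
      rw [integral_sub i1 ((hφsi s).const_mul _), integral_const_mul, hφsc]
    rw [e, ← hφsc s, ← integral_const_mul, ← Real.norm_eq_abs]
    apply norm_integral_le_of_norm_le ((hφsi s).const_mul _)
    refine Eventually.of_forall fun y => ?_
    rw [← sub_mul, norm_mul, hφψ, Real.norm_of_nonneg (sq_nonneg (ψ s y))]
    by_cases hy : y ∈ Metric.ball (p + s • v) δ
    · have hyK := hball s hs (Metric.ball_subset_closedBall hy)
      rw [Set.indicator_of_mem hyK]
      have := hu y hyK _ hq (lt_of_lt_of_le hy hδ1)
      rw [Real.dist_eq] at this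
      exact mul_le_mul_of_nonneg_right this.le (sq_nonneg _)
    · simp [hψ0 s y hy]
  have hdd := second_diff_le F F1 F2 (a * c) T hT (fun s _ => hF1 s) (fun s _ => hF2 s) hF2le
  have a1 := abs_le.1 (hFa T ⟨by linarith, le_refl _⟩)
  have a2 := abs_le.1 (hFa (-T) ⟨le_refl _, by linarith⟩)
  have a3 := abs_le.1 (hFa 0 ⟨by linarith, hT⟩)
  rw [zero_smul, add_zero] at a3
  refine le_of_mul_le_mul_right ?_ hcpos
  nlinarith [a1.1, a2.1, a3.2]

/-- If `Hess f ≤ A` holds on `Ω` in the distributional sense, then it holds at every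
point of `Ω` in the viscosity sense. -/
theorem distributional_implies_viscosity_hessian {n : ℕ}
    (Ω : Set (Fin n → ℝ)) (hΩ : IsOpen Ω)
    (f : (Fin n → ℝ) → ℝ) (hf : ContinuousOn f Ω)
    (A : (Fin n → ℝ) → Matrix (Fin n) (Fin n) ℝ)
    (hAsmooth : ∀ i j, ContDiffOn ℝ (⊤ : ℕ∞) (fun x => A x i j) Ω)
    (hAsymm : ∀ x ∈ Ω, ∀ i j, A x i j = A x j i)
    (hdist : ∀ V : (Fin n → ℝ) → (Fin n → ℝ), ContDiff ℝ (⊤ : ℕ∞) V → HasCompactSupport V →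
      tsupport V ⊆ Ω →
      ∫ x in Ω, f x * ∑ i, ∑ j, hess2 (fun y => V y i * V y j) x i j ≤
        ∫ x in Ω, ∑ i, ∑ j, A x i j * V x i * V x j) :
    ∀ p ∈ Ω, ∀ (U : Set (Fin n → ℝ)) (h : (Fin n → ℝ) → ℝ),
      IsOpen U → p ∈ U → U ⊆ Ω → ContDiffOn ℝ 2 h U → h p = f p →
      (∀ x ∈ U, h x ≤ f x) →
      ∀ v : Fin n → ℝ,
        0 ≤ ∑ i, ∑ j, (A p i j - hess2 h p i j) * v i * v j := by
  intro p hp U h hU hpU hUΩ hh hhp hle v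
  by_contra hneg
  have hCD : ∀ x ∈ U, ContDiffAt ℝ 2 h x := fun x hx => hh.contDiffAt (hU.mem_nhds hx)
  set g : (Fin n → ℝ) → ℝ := fun x => ∑ i, ∑ j, A x i j * v i * v j with hgdef
  have hg : ContinuousOn g Ω := by
    refine continuousOn_finsetSum _ fun i _ => continuousOn_finsetSum _ fun j _ => ?_
    exact ((hAsmooth i j).continuousOn.mul continuousOn_const).mul continuousOn_const
  let D : (Fin n → ℝ) → ℝ := fun x => fderiv ℝ (fun y => fderiv ℝ h y v) x v
  have hlt : g p < D p := by
    have : ∑ i, ∑ j, (A p i j - hess2 h p i j) * v i * v j = g p - D p := by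
      simp only [g, D]
      rw [← hess_sum h p v (hCD p hpU)]
      simp only [sub_mul, Finset.sum_sub_distrib]
    rw [this] at hneg
    linarith
  obtain ⟨a, ha1, ha2⟩ := exists_between hlt
  obtain ⟨b, hb1, hb2⟩ := exists_between ha2
  have hDc : ContinuousAt D p := by
    have h1 : ContDiffAt ℝ 1 (fun y => fderiv ℝ h y v) p :=
      ((hCD p hpU).fderiv_right (m := 1) (by norm_num)).clm_apply contDiffAt_const
    have h2 : ContDiffAt ℝ 0 (fderiv ℝ (fun y => fderiv ℝ h y v)) p :=
      h1.fderiv_right (m := 0) (by norm_num)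
    exact h2.continuousAt.clm_apply continuousAt_const
  have hev : ∀ᶠ x in 𝓝 p, x ∈ U ∧ g x < a ∧ b < D x :=
    (hU.eventually_mem hpU).and (((hg.continuousAt (hΩ.mem_nhds hp)).eventually_lt_const ha1).and
      (hDc.eventually_const_lt hb2))
  obtain ⟨R, hR, hRs⟩ := Metric.nhds_basis_closedBall.eventually_iff.1 hev
  let T := R / 2 / (‖v‖ + 1)
  have hv1 : 0 < ‖v‖ + 1 := by positivity
  have hT : 0 < T := by positivity
  have hTv : T * ‖v‖ ≤ R / 2 := by
    have : T * (‖v‖ + 1) = R / 2 := div_mul_cancel₀ _ hv1.ne'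
    nlinarith
  have hin : ∀ s ∈ Set.Icc (-T) T, p + s • v ∈ Metric.closedBall p R := by
    intro s hs
    rw [Metric.mem_closedBall, dist_eq_norm, add_sub_cancel_left, norm_smul, Real.norm_eq_abs]
    have : |s| * ‖v‖ ≤ T * ‖v‖ := mul_le_mul_of_nonneg_right (abs_le.2 hs) (norm_nonneg _)
    linarith
  have key := core_s7 Ω f hf g hg v ?_ p R a T hR (fun x hx => hUΩ (hRs hx).1)
    (fun x hx => (hRs hx).2.1.le) hT.le hTv
  · have hdd := second_diff_le (fun s => -h (p + s • v)) (fun s => -fderiv ℝ h (p + s • v) v)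
      (fun s => -D (p + s • v)) (-b) T hT.le
      (fun s hs => (line_derivs h p v s (hCD _ (hRs (hin s hs)).1)).1.neg)
      (fun s hs => (line_derivs h p v s (hCD _ (hRs (hin s hs)).1)).2.neg)
      (fun s hs => by linarith [(hRs (hin s hs)).2.2])
    simp only [zero_smul, add_zero] at hdd
    have l1 := hle _ (hRs (hin T ⟨by linarith, le_refl _⟩)).1
    have l2 := hle _ (hRs (hin (-T) ⟨le_refl _, by linarith⟩)).1
    have : 0 < (b - a) * T ^ 2 := mul_pos (by linarith) (by positivity)
    nlinarith
  · intro ψ hψ hψc hψt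
    have hs : Function.support (fun y => ψ y • v) ⊆ Function.support ψ := by
      intro y hy hy0
      exact hy (by simp [hy0])
    have h1 := hdist (fun y => ψ y • v) (hψ.smul contDiff_const) (hψc.mono hs)
      ((closure_mono hs).trans hψt)
    have hsq : ContDiff ℝ 2 (fun z => ψ z ^ 2) := by
      exact_mod_cast contDiff_infty.1 (hψ.pow 2) 2
    have e1 : ∀ x, ∑ i, ∑ j, hess2 (fun y => (ψ y • v) i * (ψ y • v) j) x i j =
        fderiv ℝ (fun y => fderiv ℝ (fun z => ψ z ^ 2) y v) x v := by
      intro x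
      rw [← hess_sum _ x v hsq.contDiffAt]
      refine Finset.sum_congr rfl fun i _ => Finset.sum_congr rfl fun j _ => ?_
      have hfe : (fun y => (ψ y • v) i * (ψ y • v) j) = fun y => (v i * v j) * ψ y ^ 2 := by
        ext y; simp; ring
      rw [hfe]
      simp only [hess2]
      have hdi : Differentiable ℝ (fun y => fderiv ℝ (fun z => ψ z ^ 2) y (Pi.single i 1)) :=
        ((hsq.fderiv_right (m := 1) (by norm_num)).clm_apply contDiff_const).differentiable
          one_ne_zero
      have hfi : (fun y => fderiv ℝ (fun z => (v i * v j) * ψ z ^ 2) y (Pi.single i 1)) =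
          fun y => (v i * v j) * fderiv ℝ (fun z => ψ z ^ 2) y (Pi.single i 1) := by
        ext y
        rw [fderiv_const_mul ((hsq.differentiable two_ne_zero) y)]
        simp
      rw [hfi, fderiv_const_mul (hdi x)]
      simp only [_root_.smul_apply, smul_eq_mul]
      ring
    have e2 : ∀ x, ∑ i, ∑ j, A x i j * (ψ x • v) i * (ψ x • v) j = g x * ψ x ^ 2 := by
      intro x
      simp only [g, Finset.sum_mul]
      refine Finset.sum_congr rfl fun i _ => Finset.sum_congr rfl fun j _ => ?_
      simp only [Pi.smul_apply, smul_eq_mul]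
      ring
    simp only [e1, e2] at h1
    exact h1
end

section
/- Let Ω ⊆ ℝⁿ be open, let f : Ω → ℝ be continuous, and let A be a smooth field of symmetric n×n real matrices on Ω. Suppose that for every smooth, compactly supported vector field W : Ω → ℝⁿ whose Euclidean norm ‖W‖ is a C¹ function on Ω, the function f is a viscosity supersolution of the equation −Σ_{i,j} WⁱWʲ ∂ᵢⱼf + Σ_{i,j} A_{ij}WⁱWʲ = 0 on Ω. Then f satisfies Hess f ≤ A at every point of Ω in the viscosity sense. -/
open Finset

open Topology Manifold in
lemma exists_smooth_below {n : ℕ} (Ω : Set (Fin n → ℝ)) (hΩ : IsOpen Ω)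
    (f : (Fin n → ℝ) → ℝ) (hf : ContinuousOn f Ω) :
    ∃ g : (Fin n → ℝ) → ℝ, ContDiffOn ℝ 2 g Ω ∧ ∀ x ∈ Ω, g x ≤ f x := by
  classical
  let O : TopologicalSpace.Opens (Fin n → ℝ) := ⟨Ω, hΩ⟩
  have : LocallyCompactSpace O := hΩ.locallyCompactSpace
  have : SigmaCompactSpace O := inferInstance
  obtain ⟨g, hg⟩ := exists_contMDiffMap_forall_mem_convex_of_local_const
    (n := 2) (M := O) (F := ℝ) 𝓘(ℝ, Fin n → ℝ) (t := fun x : O => Set.Iic (f x))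
    (fun x => convex_Iic _) (by
      intro x
      refine ⟨f x - 1, ?_⟩
      have hc : Continuous (fun y : O => f y) := continuousOn_iff_continuous_domRestrict.1 hf
      filter_upwards [(hc.tendsto x).eventually (lt_mem_nhds (sub_one_lt (f x)))] with y hy
      exact hy.le)
  let G : (Fin n → ℝ) → ℝ := fun x => if hx : x ∈ Ω then g ⟨x, hx⟩ else 0
  have hG : ∀ x : O, G x = g x := fun x => by
    have : (x : Fin n → ℝ) ∈ Ω := x.2
    simp [G, this]
  refine ⟨G, ?_, fun x hx => by rw [hG ⟨x, hx⟩]; exact hg ⟨x, hx⟩⟩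
  intro x hx
  have h1 : ContMDiffAt 𝓘(ℝ, Fin n → ℝ) 𝓘(ℝ, ℝ) 2 (fun y : O => G y) ⟨x, hx⟩ := by
    have : (fun y : O => G y) = g := funext hG
    rw [this]
    exact g.contMDiff _
  have h2 := contMDiffAt_subtype_iff.1 h1
  exact (contMDiffAt_iff_contDiffAt.1 h2).contDiffWithinAt

/-- If, for every compactly supported smooth vector field `W` on `Ω` whose Euclidean
norm is a `C¹` function on `Ω`, the function `f` is a viscosity supersolution of
`−Σ WⁱWʲ ∂ᵢⱼ f + Σ A_{ij} WⁱWʲ = 0` on `Ω`, then `f` satisfies `Hess f ≤ A` at every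
point of `Ω` in the viscosity sense. -/
theorem viscosity_supersolution_implies_viscosity_hessian {n : ℕ}
    (Ω : Set (Fin n → ℝ)) (hΩ : IsOpen Ω)
    (f : (Fin n → ℝ) → ℝ) (hf : ContinuousOn f Ω)
    (A : (Fin n → ℝ) → Matrix (Fin n) (Fin n) ℝ)
    (hAsmooth : ∀ i j, ContDiffOn ℝ (⊤ : ℕ∞) (fun x => A x i j) Ω)
    (hAsymm : ∀ x ∈ Ω, ∀ i j, A x i j = A x j i)
    (hsuper : ∀ W : (Fin n → ℝ) → (Fin n → ℝ), ContDiff ℝ (⊤ : ℕ∞) W → HasCompactSupport W →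
      tsupport W ⊆ Ω →
      ContDiffOn ℝ 1 (fun x => Real.sqrt (∑ i, (W x i) ^ 2)) Ω →
      ∀ x ∈ Ω, ∀ φ : (Fin n → ℝ) → ℝ, ContDiffOn ℝ 2 φ Ω →
        (∀ y ∈ Ω, f x - φ x ≤ f y - φ y) →
        0 ≤ -(∑ i, ∑ j, W x i * W x j * hess2 φ x i j) +
          ∑ i, ∑ j, A x i j * W x i * W x j) :
    ∀ p ∈ Ω, ∀ (U : Set (Fin n → ℝ)) (h : (Fin n → ℝ) → ℝ),
      IsOpen U → p ∈ U → U ⊆ Ω → ContDiffOn ℝ 2 h U → h p = f p →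
      (∀ x ∈ U, h x ≤ f x) →
      ∀ v : Fin n → ℝ,
        0 ≤ ∑ i, ∑ j, (A p i j - hess2 h p i j) * v i * v j := by
  intro p hp U h hU hpU hUΩ hh hhp hle v
  obtain ⟨g, hg, hgf⟩ := exists_smooth_below Ω hΩ f hf
  obtain ⟨r, hr, hrU⟩ := Metric.nhds_basis_closedBall.mem_iff.1 (hU.mem_nhds hpU)
  let χ : ContDiffBump p := ⟨r / 2, r, half_pos hr, half_lt_self hr⟩
  have hsupp : tsupport χ ⊆ U := by rw [χ.tsupport_eq]; exact hrU
  have hχ1 : ∀ᶠ x in nhds p, χ x = 1 := χ.eventuallyEq_one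
  have hχp : χ p = 1 := hχ1.self_of_nhds
  have hχs : ∀ {m : ℕ∞}, ContDiff ℝ m χ := χ.contDiff
  let φ : (Fin n → ℝ) → ℝ := fun x => χ x * h x + (1 - χ x) * g x
  have hφh : φ =ᶠ[nhds p] h := by
    filter_upwards [hχ1] with x hx
    simp [φ, hx]
  have hφf : ∀ y ∈ Ω, φ y ≤ f y := by
    intro y hy
    have h0 : 0 ≤ χ y := χ.nonneg
    have h1 : χ y ≤ 1 := χ.le_one
    have h2 := hgf y hy
    have h3 : χ y * h y ≤ χ y * f y := by
      by_cases hyU : y ∈ U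
      · exact mul_le_mul_of_nonneg_left (hle y hyU) h0
      · have : χ y = 0 := image_eq_zero_of_notMem_tsupport (fun hc => hyU (hsupp hc))
        simp [this]
    have h4 := mul_le_mul_of_nonneg_left h2 (sub_nonneg.2 h1)
    simp only [φ]
    linarith
  have hφ : ContDiffOn ℝ 2 φ Ω := by
    intro x hx
    refine ContDiffAt.contDiffWithinAt ?_
    have hgx : ContDiffAt ℝ 2 g x := hg.contDiffAt (hΩ.mem_nhds hx)
    have hχx : ContDiffAt ℝ 2 χ x := (hχs (m := 2)).contDiffAt
    by_cases hxU : x ∈ U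
    · have hhx : ContDiffAt ℝ 2 h x := hh.contDiffAt (hU.mem_nhds hxU)
      exact (hχx.mul hhx).add ((contDiffAt_const.sub hχx).mul hgx)
    · have hxs : x ∉ tsupport χ := fun hc => hxU (hsupp hc)
      refine hgx.congr_of_eventuallyEq ?_
      filter_upwards [notMem_tsupport_iff_eventuallyEq.1 hxs] with y hy
      simp at hy
      simp [φ, hy]
  have hhess : ∀ i j, hess2 φ p i j = hess2 h p i j := by
    intro i j
    unfold hess2
    have : (fun x => fderiv ℝ φ x (Pi.single i 1)) =ᶠ[nhds p]
        (fun x => fderiv ℝ h x (Pi.single i 1)) := by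
      filter_upwards [hφh.fderiv (𝕜 := ℝ)] with x hx
      rw [hx]
    rw [this.fderiv_eq]
  have hWs : tsupport (fun x => χ x • v) ⊆ tsupport χ :=
    closure_mono (fun x hx hc => hx (by simp only [hc, zero_smul]))
  have key := hsuper (fun x => χ x • v) ((hχs).smul contDiff_const)
    (χ.hasCompactSupport.smul_right) (hWs.trans (hsupp.trans hUΩ)) (by
      have : (fun x => Real.sqrt (∑ i, ((χ x • v) i) ^ 2)) =
          fun x => χ x * Real.sqrt (∑ i, (v i) ^ 2) := by
        funext x
        simp only [Pi.smul_apply, smul_eq_mul, mul_pow, ← Finset.mul_sum]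
        rw [Real.sqrt_mul (sq_nonneg _), Real.sqrt_sq χ.nonneg]
      rw [this]
      exact ((hχs (m := 1)).mul contDiff_const).contDiffOn) p hp φ hφ (by
      intro y hy
      have h1 : φ p = f p := by rw [hφh.self_of_nhds, hhp]
      have := hφf y hy
      linarith)
  simp only [hχp, one_smul, hhess] at key
  refine key.trans_eq ?_
  rw [neg_add_eq_sub, ← Finset.sum_sub_distrib]
  refine Finset.sum_congr rfl fun i _ => ?_
  rw [← Finset.sum_sub_distrib]
  exact Finset.sum_congr rfl fun j _ => by ring
end

section
/- Let Ω ⊆ ℝⁿ be open, let f : Ω → ℝ be continuous, and let A be a smooth field of symmetric n×n real matrices on Ω. If f satisfies Hess f ≤ A on Ω in the distributional sense, then for every smooth, compactly supported vector field W : Ω → ℝⁿ and every smooth, nonnegative, compactly supported function φ : Ω → ℝ one has ∫_Ω [ −f(x) Σ_{i,j} ∂²(Wⁱ Wʲ φ)/∂xⱼ∂xᵢ(x) + Σ_{i,j} A_{ij}(x) Wⁱ(x) Wʲ(x) φ(x) ] dx ≥ 0; that is, f is a distributional supersolution of the equation −Σ_{i,j} WⁱWʲ ∂ᵢⱼf +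 Σ_{i,j} A_{ij}WⁱWʲ = 0. -/
open Finset

open MeasureTheory in
theorem aux_int {n : ℕ} {Ω : Set (Fin n → ℝ)} {u k : (Fin n → ℝ) → ℝ}
    (hu : ContinuousOn u Ω) (hk : Continuous k) (hc : HasCompactSupport k)
    (hs : tsupport k ⊆ Ω) : IntegrableOn (fun x => u x * k x) Ω := by
  have h1 : IntegrableOn (fun x => u x * k x) (tsupport k) :=
    ContinuousOn.integrableOn_compact hc ((hu.mono hs).mul hk.continuousOn)
  have h2 : Integrable (fun x => u x * k x) := by
    refine (integrableOn_iff_integrable_of_support_subset ?_).1 h1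
    intro x hx
    apply subset_tsupport k
    intro h0
    exact hx (by simp [h0])
  exact h2.integrableOn

theorem aux_d {n : ℕ} {h : (Fin n → ℝ) → ℝ} (hh : ContDiff ℝ (⊤ : ℕ∞) h) (v : Fin n → ℝ) :
    ContDiff ℝ (⊤ : ℕ∞) (fun x => fderiv ℝ h x v) :=
  (hh.fderiv_right (m := (⊤ : ℕ∞)) (by simp)).clm_apply contDiff_const

theorem aux_cont {n : ℕ} {h : (Fin n → ℝ) → ℝ} (hh : ContDiff ℝ (⊤ : ℕ∞) h) (i j : Fin n) :
    Continuous (fun x => hess2 h x i j) :=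
  (aux_d (aux_d hh _) _).continuous

theorem aux_supp {n : ℕ} (h : (Fin n → ℝ) → ℝ) (i j : Fin n) :
    tsupport (fun x => hess2 h x i j) ⊆ tsupport h :=
  (tsupport_fderiv_apply_subset ℝ _).trans (tsupport_fderiv_apply_subset ℝ _)

theorem aux_lin {n : ℕ} {g h : (Fin n → ℝ) → ℝ} (hg : ContDiff ℝ (⊤ : ℕ∞) g)
    (hh : ContDiff ℝ (⊤ : ℕ∞) h) (c : ℝ) (x : Fin n → ℝ) (i j : Fin n) :
    hess2 (fun y => g y + c * h y) x i j = hess2 g x i j + c * hess2 h x i j := by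
  have key : ∀ {g h : (Fin n → ℝ) → ℝ}, ContDiff ℝ (⊤ : ℕ∞) g → ContDiff ℝ (⊤ : ℕ∞) h →
      ∀ x v, fderiv ℝ (fun y => g y + c * h y) x v = fderiv ℝ g x v + c * fderiv ℝ h x v := by
    intro g h hg hh x v
    have h1 := (hg.differentiable (by simp) x).hasFDerivAt
    have h2 := (hh.differentiable (by simp) x).hasFDerivAt
    rw [(h1.fun_add (h2.const_mul c)).fderiv]
    simp
  unfold hess2
  rw [show (fun x => fderiv ℝ (fun y => g y + c * h y) x (Pi.single i 1)) =
    fun x => fderiv ℝ g x (Pi.single i 1) + c * fderiv ℝ h x (Pi.single i 1) from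
    funext fun x => key hg hh x _]
  exact key (aux_d hg _) (aux_d hh _) x _

/-- If `Hess f ≤ A` holds on `Ω` in the distributional sense, then for every compactly
supported smooth vector field `W` and every smooth nonnegative compactly supported
function `φ`, `f` is a distributional supersolution of
`−Σ WⁱWʲ ∂ᵢⱼ f + Σ A_{ij} WⁱWʲ = 0`. -/
theorem distributional_hessian_implies_distributional_supersolution {n : ℕ}
    (Ω : Set (Fin n → ℝ)) (hΩ : IsOpen Ω)
    (f : (Fin n → ℝ) → ℝ) (hf : ContinuousOn f Ω)
    (A : (Fin n → ℝ) → Matrix (Fin n) (Fin n) ℝ)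
    (hAsmooth : ∀ i j, ContDiffOn ℝ (⊤ : ℕ∞) (fun x => A x i j) Ω)
    (hAsymm : ∀ x ∈ Ω, ∀ i j, A x i j = A x j i)
    (hdist : ∀ V : (Fin n → ℝ) → (Fin n → ℝ), ContDiff ℝ (⊤ : ℕ∞) V → HasCompactSupport V →
      tsupport V ⊆ Ω →
      ∫ x in Ω, f x * ∑ i, ∑ j, hess2 (fun y => V y i * V y j) x i j ≤
        ∫ x in Ω, ∑ i, ∑ j, A x i j * V x i * V x j) :
    ∀ W : (Fin n → ℝ) → (Fin n → ℝ), ContDiff ℝ (⊤ : ℕ∞) W → HasCompactSupport W →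
      tsupport W ⊆ Ω →
      ∀ φ : (Fin n → ℝ) → ℝ, ContDiff ℝ (⊤ : ℕ∞) φ → HasCompactSupport φ → tsupport φ ⊆ Ω →
        (∀ x, 0 ≤ φ x) →
        0 ≤ ∫ x in Ω,
          (-(f x * ∑ i, ∑ j, hess2 (fun y => W y i * W y j * φ y) x i j) +
            ∑ i, ∑ j, A x i j * W x i * W x j * φ x) := by
  intro W hW hWc hWs φ hφ hφc hφs hφ0
  have hWi : ∀ i, ContDiff ℝ (⊤ : ℕ∞) (fun y => W y i) := fun i => contDiff_pi.1 hW i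
  have hWW : ∀ i j, ContDiff ℝ (⊤ : ℕ∞) (fun y => W y i * W y j) :=
    fun i j => (hWi i).mul (hWi j)
  have hWWφ : ∀ i j, ContDiff ℝ (⊤ : ℕ∞) (fun y => W y i * W y j * φ y) :=
    fun i j => (hWW i j).mul hφ
  have sub : ∀ k : (Fin n → ℝ) → ℝ, (∀ x, W x = 0 → k x = 0) → tsupport k ⊆ tsupport W := by
    intro k hk
    apply closure_mono
    intro x hx h0
    exact hx (hk x h0)
  have s1 : ∀ i j, tsupport (fun y => W y i * W y j) ⊆ tsupport W :=
    fun i j => sub _ (fun x hx => by simp [hx])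
  have s2 : ∀ i j, tsupport (fun y => W y i * W y j * φ y) ⊆ tsupport W :=
    fun i j => sub _ (fun x hx => by simp [hx])
  have int : ∀ (u k : (Fin n → ℝ) → ℝ), ContinuousOn u Ω → Continuous k →
      tsupport k ⊆ tsupport W → MeasureTheory.IntegrableOn (fun x => u x * k x) Ω :=
    fun u k hu hk hs => aux_int hu hk (hWc.of_isClosed_subset (isClosed_tsupport _) hs)
      (hs.trans hWs)
  have I1 : MeasureTheory.IntegrableOn
      (fun x => f x * ∑ i, ∑ j, hess2 (fun y => W y i * W y j * φ y) x i j) Ω := by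
    simp only [Finset.mul_sum]
    refine MeasureTheory.integrable_finsetSum _ fun i _ =>
      MeasureTheory.integrable_finsetSum _ fun j _ => ?_
    exact int _ _ hf (aux_cont (hWWφ i j) i j) ((aux_supp _ i j).trans (s2 i j))
  have I2 : MeasureTheory.IntegrableOn
      (fun x => f x * ∑ i, ∑ j, hess2 (fun y => W y i * W y j) x i j) Ω := by
    simp only [Finset.mul_sum]
    refine MeasureTheory.integrable_finsetSum _ fun i _ =>
      MeasureTheory.integrable_finsetSum _ fun j _ => ?_
    exact int _ _ hf (aux_cont (hWW i j) i j) ((aux_supp _ i j).trans (s1 i j))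
  have I3 : MeasureTheory.IntegrableOn
      (fun x => ∑ i, ∑ j, A x i j * W x i * W x j * φ x) Ω := by
    refine MeasureTheory.integrable_finsetSum _ fun i _ =>
      MeasureTheory.integrable_finsetSum _ fun j _ => ?_
    have := int _ _ (hAsmooth i j).continuousOn (hWWφ i j).continuous (s2 i j)
    simpa only [mul_assoc, MeasureTheory.IntegrableOn] using this
  have I4 : MeasureTheory.IntegrableOn
      (fun x => ∑ i, ∑ j, A x i j * W x i * W x j) Ω := by
    refine MeasureTheory.integrable_finsetSum _ fun i _ =>
      MeasureTheory.integrable_finsetSum _ fun j _ => ?_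
    have := int _ _ (hAsmooth i j).continuousOn (hWW i j).continuous (s1 i j)
    simpa only [mul_assoc, MeasureTheory.IntegrableOn] using this
  have main : ∀ ε : ℝ, 0 < ε →
      (∫ x in Ω, f x * ∑ i, ∑ j, hess2 (fun y => W y i * W y j * φ y) x i j) +
        ε * (∫ x in Ω, f x * ∑ i, ∑ j, hess2 (fun y => W y i * W y j) x i j) ≤
      (∫ x in Ω, ∑ i, ∑ j, A x i j * W x i * W x j * φ x) +
        ε * ∫ x in Ω, ∑ i, ∑ j, A x i j * W x i * W x j := by
    intro ε hε
    have hpos : ∀ x, 0 < φ x + ε := fun x => by linarith [hφ0 x]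
    have hsq : ∀ x, √(φ x + ε) * √(φ x + ε) = φ x + ε :=
      fun x => Real.mul_self_sqrt (hpos x).le
    have hVs : tsupport (fun x => √(φ x + ε) • W x) ⊆ tsupport W := by
      apply closure_mono
      intro x hx h0
      exact hx (by simp [h0])
    have h := hdist (fun x => √(φ x + ε) • W x)
      (((hφ.add contDiff_const).sqrt fun x => (hpos x).ne').smul hW)
      (hWc.of_isClosed_subset (isClosed_tsupport _) hVs) (hVs.trans hWs)
    have e1 : ∀ i j, (fun y => (√(φ y + ε) • W y) i * (√(φ y + ε) • W y) j) =
        fun y => W y i * W y j * φ y + ε * (W y i * W y j) := by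
      intro i j
      funext y
      simp only [Pi.smul_apply, smul_eq_mul]
      linear_combination (W y i * W y j) * hsq y
    have e2 : ∀ x i j, A x i j * (√(φ x + ε) • W x) i * (√(φ x + ε) • W x) j =
        A x i j * W x i * W x j * φ x + ε * (A x i j * W x i * W x j) := by
      intro x i j
      simp only [Pi.smul_apply, smul_eq_mul]
      linear_combination (A x i j * W x i * W x j) * hsq x
    simp only [e1, e2, aux_lin (hWWφ _ _) (hWW _ _), Finset.sum_add_distrib,
      ← Finset.mul_sum, mul_add, mul_left_comm _ ε] at h
    rw [MeasureTheory.integral_add I1 (I2.const_mul ε),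
      MeasureTheory.integral_add I3 (I4.const_mul ε),
      MeasureTheory.integral_const_mul, MeasureTheory.integral_const_mul] at h
    exact h
  rw [MeasureTheory.integral_add (f := fun x => -(f x * ∑ i, ∑ j, hess2 (fun y => W y i * W y j * φ y) x i j)) I1.neg I3, MeasureTheory.integral_neg]
  generalize (∫ x in Ω, f x * ∑ i, ∑ j, hess2 (fun y => W y i * W y j * φ y) x i j) = a at *
  generalize (∫ x in Ω, f x * ∑ i, ∑ j, hess2 (fun y => W y i * W y j) x i j) = b at *
  generalize (∫ x in Ω, ∑ i, ∑ j, A x i j * W x i * W x j * φ x) = c at *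
  generalize (∫ x in Ω, ∑ i, ∑ j, A x i j * W x i * W x j) = d at *
  by_contra hneg
  push Not at hneg
  have hD : 0 < |d - b| + 1 := by positivity
  have h := main ((a - c) / (2 * (|d - b| + 1))) (by apply div_pos <;> linarith)
  have h3 : (a - c) / (2 * (|d - b| + 1)) * (d - b) ≤ (a - c) / 2 := by
    have h4 : (a - c) / (2 * (|d - b| + 1)) * (d - b) ≤
        (a - c) / (2 * (|d - b| + 1)) * (|d - b| + 1) := by
      apply mul_le_mul_of_nonneg_left
      · linarith [le_abs_self (d - b)]
      · apply div_nonneg <;> linarith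
    refine h4.trans (le_of_eq ?_)
    field_simp
  nlinarith
end

section
/- Let u : ℝⁿ → ℝ be a continuous, locally semiconcave function. If u is differentiable at every point of ℝⁿ, then u is continuously differentiable, i.e. u ∈ C¹(ℝⁿ). -/
/-- A continuous function `u : ℝⁿ → ℝ` is locally semiconcave if on every open convex
set with compact closure it is the sum of a `C²` function and a concave function. -/
def LocallySemiconcave {n : ℕ} (u : EuclideanSpace ℝ (Fin n) → ℝ) : Prop :=
  ∀ K : Set (EuclideanSpace ℝ (Fin n)), IsOpen K → Convex ℝ K → IsCompact (closure K) →
    ∃ g c : EuclideanSpace ℝ (Fin n) → ℝ,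
      ContDiffOn ℝ 2 g K ∧ ConcaveOn ℝ K c ∧ ∀ x ∈ K, u x = g x + c x

theorem aux_supergrad {E : Type*} [NormedAddCommGroup E] [NormedSpace ℝ E] {K : Set E}
    {c : E → ℝ} (hc : ConcaveOn ℝ K c) {x w : E} (hx : x ∈ K) (hxw : x + w ∈ K)
    (hd : DifferentiableAt ℝ c x) : c (x + w) - c x ≤ fderiv ℝ c x w := by
  have h1 := hc.comp_affineMap (AffineMap.lineMap x (x + w) : ℝ →ᵃ[ℝ] E)
  have h0 : (AffineMap.lineMap x (x + w) : ℝ →ᵃ[ℝ] E) 0 = x := by simp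
  have h2 : HasDerivAt (c ∘ (AffineMap.lineMap x (x + w) : ℝ →ᵃ[ℝ] E)) (fderiv ℝ c x w) 0 := by
    have h3 : HasDerivAt (AffineMap.lineMap x (x + w) : ℝ →ᵃ[ℝ] E) w (0 : ℝ) := by
      simpa using (AffineMap.hasDerivAt_lineMap (a := x) (b := x + w) (x := (0 : ℝ)))
    refine HasFDerivAt.comp_hasDerivAt (0 : ℝ) ?_ h3
    rw [h0]
    exact hd.hasFDerivAt
  have h4 := h1.slope_le_of_hasDerivWithinAt_Ioi (x := 0) (y := 1) (by simpa using hx)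
    (by simpa using hxw) one_pos h2.hasDerivWithinAt
  simpa [slope_def_field] using h4

theorem aux_cont_s13 {E : Type*} [NormedAddCommGroup E] [NormedSpace ℝ E] {K : Set E}
    (hK : IsOpen K) {c : E → ℝ} (hc : ConcaveOn ℝ K c)
    (hd : ∀ x ∈ K, DifferentiableAt ℝ c x) {x₀ : E} (hx₀ : x₀ ∈ K) :
    ContinuousAt (fderiv ℝ c) x₀ := by
  rw [Metric.continuousAt_iff]
  intro e he
  have h1 := (hd x₀ hx₀).hasFDerivAt.isLittleO.def (show 0 < e / 4 by positivity)
  obtain ⟨d, hd0, hball⟩ := Metric.eventually_nhds_iff.1 (h1.and (hK.mem_nhds hx₀))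
  refine ⟨d / 2, by positivity, fun x hx => ?_⟩
  by_cases hne : x = x₀
  · simpa [hne] using he
  rw [dist_eq_norm] at hx ⊢
  have hr : 0 < ‖x - x₀‖ := norm_pos_iff.2 (sub_ne_zero.2 hne)
  set r := ‖x - x₀‖ with hrdef
  obtain ⟨hx1, hxK⟩ := hball (y := x) (by rw [dist_eq_norm]; linarith)
  have key : ∀ v : E, ‖v‖ = 1 → -(3 * (e / 4)) ≤ (fderiv ℝ c x - fderiv ℝ c x₀) v := by
    intro v hv
    have hn : ‖x + r • v - x₀‖ ≤ 2 * r := by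
      calc ‖x + r • v - x₀‖ = ‖(x - x₀) + r • v‖ := by congr 1; abel
        _ ≤ ‖x - x₀‖ + ‖r • v‖ := norm_add_le _ _
        _ = 2 * r := by rw [norm_smul, hv, Real.norm_of_nonneg hr.le, ← hrdef]; ring
    obtain ⟨hy1, hyK⟩ := hball (y := x + r • v) (by rw [dist_eq_norm]; linarith)
    have h2 := aux_supergrad hc hxK hyK (hd x hxK)
    rw [Real.norm_eq_abs, abs_le] at hx1 hy1
    have h3 : fderiv ℝ c x₀ (x + r • v - x₀) = fderiv ℝ c x₀ (x - x₀) + r * fderiv ℝ c x₀ v := by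
      rw [show x + r • v - x₀ = (x - x₀) + r • v by abel]; simp
    rw [h3] at hy1
    have h4 : fderiv ℝ c x (r • v) = r * fderiv ℝ c x v := by simp
    rw [h4] at h2
    have h5 : e / 4 * ‖x + r • v - x₀‖ ≤ e / 4 * (2 * r) := by gcongr
    rw [sub_apply]
    refine le_of_mul_le_mul_left ?_ hr
    linarith [hx1.1, hx1.2, hy1.1, hy1.2]
  have : ‖fderiv ℝ c x - fderiv ℝ c x₀‖ ≤ 3 * (e / 4) := by
    refine ContinuousLinearMap.opNorm_le_of_unit_norm (by positivity) fun v hv => ?_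
    rw [Real.norm_eq_abs, abs_le]
    refine ⟨key v hv, ?_⟩
    have := key (-v) (by simpa using hv)
    rw [map_neg] at this
    linarith
  linarith

/-- A continuous, locally semiconcave function which is differentiable at every point
is continuously differentiable. -/
theorem contDiff_one_of_locallySemiconcave_of_differentiable {n : ℕ}
    (u : EuclideanSpace ℝ (Fin n) → ℝ) (hu : Continuous u)
    (hsc : LocallySemiconcave u)
    (hdiff : ∀ x : EuclideanSpace ℝ (Fin n), DifferentiableAt ℝ u x) :
    ContDiff ℝ 1 u := by
  refine contDiff_one_iff_fderiv.2 ⟨hdiff, continuous_iff_continuousAt.2 fun x₀ => ?_⟩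
  have hK : IsOpen (Metric.ball x₀ 1) := Metric.isOpen_ball
  have hx₀ : x₀ ∈ Metric.ball x₀ 1 := Metric.mem_ball_self one_pos
  obtain ⟨g, c, hg, hc, huc⟩ := hsc (Metric.ball x₀ 1) hK (convex_ball _ _)
    Metric.isBounded_ball.isCompact_closure
  have hgd : ∀ x ∈ Metric.ball x₀ 1, DifferentiableAt ℝ g x := fun x hx =>
    (hg.differentiableOn (by norm_num)).differentiableAt (hK.mem_nhds hx)
  have hc' : ConcaveOn ℝ (Metric.ball x₀ 1) (u - g) :=
    hc.congr fun x hx => by simp [huc x hx]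
  have h1 := aux_cont_s13 hK hc' (fun x hx => (hdiff x).sub (hgd x hx)) hx₀
  have h2 : ContinuousAt (fderiv ℝ g) x₀ :=
    (hg.continuousOn_fderiv_of_isOpen hK (by norm_num)).continuousAt (hK.mem_nhds hx₀)
  refine (h1.add h2).congr ?_
  filter_upwards [hK.mem_nhds hx₀] with x hx
  rw [Pi.add_apply, fderiv_sub (hdiff x) (hgd x hx)]
  simp
end
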